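/- arXiv:1307.2893 — 2 statements merged into one kernel-verified Lean document; each statement's English description precedes it below -/
import Mathlib

section
/- In a nonlinear model (p_k ≠ k/m for some 0 ≤ k ≤ m) with X_0 > 0 and Y_0 > 0: if 0 ∈ Z_P and there exists ε > 0 with P > 0 on (0, ε), then P(lim_{n→∞} a_n = 0) = 0; and if 1 ∈ Z_P and there exists ε > 0 with P < 0 on (1−ε, 1), then P(lim_{n→∞} a_n = 1) = 0. -/
open MeasureTheory ProbabilityTheory Filter Set

noncomputable section

/-- The polynomial `P(z) = (1/2) ∑_{k=0}^m C(m,k) z^k (1-z)^{m-k} (p_k - k/m)`. -/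
def polyP (m : ℕ) (p : ℕ → ℝ) (z : ℝ) : ℝ :=
  (1 / 2) * ∑ k ∈ Finset.range (m + 1),
    (m.choose k : ℝ) * z ^ k * (1 - z) ^ (m - k) * (p k - (k : ℝ) / m)

/-- The zero set `Z_P = {z ∈ [0,1] : P(z) = 0}`. -/
def zeroSetP (m : ℕ) (p : ℕ → ℝ) : Set ℝ :=
  {z ∈ Set.Icc (0 : ℝ) 1 | polyP m p z = 0}

/-- The two-type preferential attachment process with `m` edges per new node and type
adoption parameters `p 0, …, p m`, defined on a probability space `(Ω, μ)` with filtration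
`F`.  `A n` is the number of red nodes and `X n` the sum of the degrees of red nodes at time
`n`; the transition probabilities given `F n` are those of the model: a number `k` of red
neighbours is drawn from the `Binomial(m, x_n)` distribution, and then the new node is red
with probability `p k` (adding `1` to the red nodes and `k + m` to the red degrees) and blue
with probability `1 - p k` (adding `k` to the red degrees). -/
structure PAProcess (Ω : Type) [MeasurableSpace Ω] where
  μ : Measure Ω
  isProb : IsProbabilityMeasure μ
  m : ℕ
  hm : 1 ≤ m
  p : ℕ → ℝ
  hp : ∀ k ≤ m, p k ∈ Set.Icc (0 : ℝ) 1
  A : ℕ → Ω → ℕ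
  X : ℕ → Ω → ℕ
  F : Filtration ℕ ‹MeasurableSpace Ω›
  A0 : ℕ
  B0 : ℕ
  X0 : ℕ
  Y0 : ℕ
  hA0 : ∀ ω, A 0 ω = A0
  hX0 : ∀ ω, X 0 ω = X0
  adaptedA : ∀ n, Measurable[F n] (A n)
  adaptedX : ∀ n, Measurable[F n] (X n)
  hXle : ∀ n ω, X n ω ≤ X0 + Y0 + 2 * m * n
  step_red : ∀ n, ∀ k ≤ m,
    μ[Set.indicator {ω | A (n + 1) ω = A n ω + 1 ∧ X (n + 1) ω = X n ω + k + m}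
        (fun _ => (1 : ℝ)) | F n]
      =ᵐ[μ] fun ω => (m.choose k : ℝ) *
        ((X n ω : ℝ) / ((X0 : ℝ) + Y0 + 2 * m * n)) ^ k *
        (1 - (X n ω : ℝ) / ((X0 : ℝ) + Y0 + 2 * m * n)) ^ (m - k) * p k
  step_blue : ∀ n, ∀ k ≤ m,
    μ[Set.indicator {ω | A (n + 1) ω = A n ω ∧ X (n + 1) ω = X n ω + k}
        (fun _ => (1 : ℝ)) | F n]
      =ᵐ[μ] fun ω => (m.choose k : ℝ) *
        ((X n ω : ℝ) / ((X0 : ℝ) + Y0 + 2 * m * n)) ^ k *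
        (1 - (X n ω : ℝ) / ((X0 : ℝ) + Y0 + 2 * m * n)) ^ (m - k) * (1 - p k)

namespace PAProcess

variable {Ω : Type} [MeasurableSpace Ω] (P : PAProcess Ω)

/-- Total degree `S_n = S_0 + 2mn`. -/
def S (n : ℕ) : ℕ := P.X0 + P.Y0 + 2 * P.m * n

/-- Normalized red degree `x_n = X_n / S_n`. -/
def x (n : ℕ) (ω : Ω) : ℝ := (P.X n ω : ℝ) / (P.S n : ℝ)

/-- Normalized red node count `a_n = A_n / (A_0 + B_0 + n)`. -/
def a (n : ℕ) (ω : Ω) : ℝ := (P.A n ω : ℝ) / ((P.A0 : ℝ) + P.B0 + n)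

/-- The polynomial `P` of the process. -/
def poly : ℝ → ℝ := polyP P.m P.p

/-- The zero set `Z_P` of the process. -/
def Zp : Set ℝ := zeroSetP P.m P.p

end PAProcess

lemma det_lemma (w c e : ℕ → ℝ) (hc0 : ∀ n, 0 ≤ c n) (hc1 : ∀ n, c n ≤ 1)
    (hc : Tendsto (fun n => ∑ i ∈ Finset.range n, c i) atTop atTop)
    (he : Tendsto e atTop (nhds 0))
    (hw : ∀ n, w (n + 1) = (1 - c n) * w n + c n * e n) : Tendsto w atTop (nhds 0) := by
  rw [Metric.tendsto_atTop]
  intro ε hε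
  rw [Metric.tendsto_atTop] at he
  obtain ⟨N, hN⟩ := he (ε / 2) (by positivity)
  have hN' : ∀ n ≥ N, |e n| ≤ ε / 2 := fun n hn => by
    have := hN n hn
    rw [Real.dist_eq, sub_zero] at this; exact this.le
  have key : ∀ n ≥ N, |w n| ≤ ε / 2 + |w N| *
      Real.exp (-(∑ i ∈ Finset.range n, c i - ∑ i ∈ Finset.range N, c i)) := by
    intro n hn
    induction n, hn using Nat.le_induction with
    | base => simp; positivity
    | succ n hn ih =>
      rw [hw, Finset.sum_range_succ]
      have h1 : Real.exp (-(∑ i ∈ Finset.range n, c i + c n - ∑ i ∈ Finset.range N, c i))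
          = Real.exp (-(∑ i ∈ Finset.range n, c i - ∑ i ∈ Finset.range N, c i))
            * Real.exp (- c n) := by
        rw [← Real.exp_add]; congr 1; ring
      rw [h1]
      have h2 : 1 - c n ≤ Real.exp (- c n) := by
        have := Real.add_one_le_exp (- c n); linarith
      set E := Real.exp (-(∑ i ∈ Finset.range n, c i - ∑ i ∈ Finset.range N, c i)) with hE
      have hE0 : 0 < E := Real.exp_pos _
      have h3 : |(1 - c n) * w n + c n * e n| ≤ (1 - c n) * |w n| + c n * |e n| := by
        refine (abs_add_le _ _).trans ?_
        rw [abs_mul, abs_mul, abs_of_nonneg (hc0 n), abs_of_nonneg (sub_nonneg.2 (hc1 n))]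
      have h4 := mul_le_mul_of_nonneg_left ih (sub_nonneg.2 (hc1 n))
      have h5 := mul_le_mul_of_nonneg_left (hN' n hn) (hc0 n)
      have h6 := mul_le_mul_of_nonneg_left h2 (mul_nonneg (abs_nonneg (w N)) hE0.le)
      nlinarith
  have ht : Tendsto (fun n => ε / 2 + |w N| *
      Real.exp (-(∑ i ∈ Finset.range n, c i - ∑ i ∈ Finset.range N, c i))) atTop
      (nhds (ε / 2 + |w N| * 0)) := by
    refine tendsto_const_nhds.add (tendsto_const_nhds.mul ?_)
    refine Real.tendsto_exp_neg_atTop_nhds_zero.comp ?_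
    exact tendsto_atTop_add_const_right _ _ hc
  have hev := (ht.eventually (gt_mem_nhds (show ε / 2 + |w N| * 0 < ε by linarith))).and
    (eventually_ge_atTop N)
  obtain ⟨M, hM⟩ := eventually_atTop.1 hev
  refine ⟨M, fun n hn => ?_⟩
  rw [Real.dist_eq, sub_zero]
  exact (key n (hM n hn).2).trans_lt (hM n hn).1

lemma harm_lemma (a b c : ℝ) (ha : 0 ≤ a) (hb : 0 < b) (hc : 0 < c) :
    Tendsto (fun n => ∑ i ∈ Finset.range n, c / (a + b * ((i : ℝ) + 1))) atTop atTop := by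
  have h := Real.tendsto_sum_range_one_div_nat_succ_atTop.const_mul_atTop
    (show 0 < c / (a + b) by positivity)
  refine tendsto_atTop_mono (fun n => ?_) h
  rw [Finset.mul_sum]
  refine Finset.sum_le_sum fun i _ => ?_
  rw [div_mul_div_comm, mul_one]
  apply div_le_div_of_nonneg_left hc.le (by positivity)
  have : (0 : ℝ) ≤ i := Nat.cast_nonneg i
  nlinarith [mul_nonneg ha this]

/-- Bernstein weights -/
def bq (m k : ℕ) (z : ℝ) : ℝ := (m.choose k : ℝ) * z ^ k * (1 - z) ^ (m - k)

lemma bq_eval (m k : ℕ) (z : ℝ) : (bernsteinPolynomial ℝ m k).eval z = bq m k z := by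
  simp [bernsteinPolynomial, bq]

lemma bq_nonneg (m k : ℕ) {z : ℝ} (h0 : 0 ≤ z) (h1 : z ≤ 1) : 0 ≤ bq m k z := by
  have := sub_nonneg.2 h1
  unfold bq; positivity

lemma bq_sum (m : ℕ) (z : ℝ) : ∑ k ∈ Finset.range (m + 1), bq m k z = 1 := by
  have := congrArg (Polynomial.eval z) (bernsteinPolynomial.sum ℝ m)
  simpa [Polynomial.eval_finsetSum, bq_eval] using this

lemma bq_sum_mul (m : ℕ) (z : ℝ) : ∑ k ∈ Finset.range (m + 1), bq m k z * k = m * z := by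
  have := congrArg (Polynomial.eval z) (bernsteinPolynomial.sum_smul ℝ m)
  simpa [Polynomial.eval_finsetSum, bq_eval, mul_comm] using this

lemma drift_eq (m : ℕ) (hm : 1 ≤ m) (p : ℕ → ℝ) (z : ℝ) :
    ∑ k ∈ Finset.range (m + 1), bq m k z * (k + m * p k) = 2 * m * (z + polyP m p z) := by
  have h := bq_sum_mul m z
  have hm' : (m : ℝ) ≠ 0 := by positivity
  have h2 : 2 * m * polyP m p z = ∑ k ∈ Finset.range (m + 1), bq m k z * (m * p k - k) := by
    unfold polyP bq
    rw [← mul_assoc, Finset.mul_sum]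
    refine Finset.sum_congr rfl fun k _ => ?_
    field_simp
  rw [mul_add, h2, mul_assoc 2, ← h, Finset.mul_sum, ← Finset.sum_add_distrib]
  refine Finset.sum_congr rfl fun k _ => ?_
  ring

/-- pointwise supermartingale inequality -/
lemma super_ineq (m : ℕ) (hm : 1 ≤ m) (p : ℕ → ℝ) (hp : ∀ k ≤ m, p k ∈ Set.Icc (0 : ℝ) 1)
    (X : ℕ) (S : ℝ) (hX : 2 * m < X) (hS : (X : ℝ) ≤ S) (hP : 0 ≤ polyP m p (X / S)) :
    ∑ k ∈ Finset.range (m + 1), bq m k (X / S) *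
      (p k * ((S + 2 * m) / ((X + k + m - 2 * m : ℕ) : ℝ)) +
        (1 - p k) * ((S + 2 * m) / ((X + k - 2 * m : ℕ) : ℝ))) ≤ S / ((X - 2 * m : ℕ) : ℝ) := by
  obtain ⟨Z, rfl⟩ : ∃ Z, X = Z + 2 * m := ⟨X - 2 * m, by omega⟩
  have hZ : 0 < Z := by omega
  have hZ' : (0 : ℝ) < Z := by exact_mod_cast hZ
  have hm' : (1 : ℝ) ≤ m := by exact_mod_cast hm
  have hXp : (0 : ℝ) < ((Z + 2 * m : ℕ) : ℝ) := by positivity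
  have hSp : 0 < S := hXp.trans_le hS
  set z := ((Z + 2 * m : ℕ) : ℝ) / S with hz
  have hz0 : 0 ≤ z := by positivity
  have hz1 : z ≤ 1 := (div_le_one hSp).2 hS
  have gen : ∀ d : ℝ, 0 ≤ d → d ≤ 2 * m →
      (S + 2 * m) / (Z + d) ≤ (S + 2 * m) / Z * (1 - d / (Z + 2 * m)) := by
    intro d h0 h1
    rw [div_le_iff₀ (by positivity)]
    have : (S + 2 * m) / Z * (1 - d / (Z + 2 * m)) * (Z + d) =
      (S + 2 * m) + (S + 2 * m) / Z * (d * (2 * m - d) / (Z + 2 * m)) := by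
      field_simp; ring
    rw [this]
    have : 0 ≤ 2 * m - d := by linarith
    have : 0 ≤ (S + 2 * m) / Z * (d * (2 * m - d) / (Z + 2 * m)) := by positivity
    linarith
  have step : ∀ k ∈ Finset.range (m + 1), bq m k z *
      (p k * ((S + 2 * m) / ((Z + 2 * m + k + m - 2 * m : ℕ) : ℝ)) +
        (1 - p k) * ((S + 2 * m) / ((Z + 2 * m + k - 2 * m : ℕ) : ℝ))) ≤
      (S + 2 * m) / Z * (bq m k z) - (S + 2 * m) / Z / (Z + 2 * m) * (bq m k z * (k + m * p k)) := by
    intro k hk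
    have hk' : k ≤ m := by simpa [Nat.lt_succ_iff] using hk
    have hkr : (k : ℝ) ≤ m := by exact_mod_cast hk'
    have e1 : Z + 2 * m + k + m - 2 * m = Z + (k + m) := by omega
    have e2 : Z + 2 * m + k - 2 * m = Z + k := by omega
    rw [e1, e2]
    have g1 := gen (k + m) (by positivity) (by linarith)
    have g2 := gen k (by positivity) (by linarith)
    have p0 := (hp k hk').1
    have p1 := sub_nonneg.2 (hp k hk').2
    push_cast
    calc _ ≤ bq m k z * (p k * ((S + 2 * m) / Z * (1 - (k + m) / (Z + 2 * m))) +
          (1 - p k) * ((S + 2 * m) / Z * (1 - k / (Z + 2 * m)))) := by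
          apply mul_le_mul_of_nonneg_left _ (bq_nonneg m k hz0 hz1)
          exact add_le_add (mul_le_mul_of_nonneg_left g1 p0) (mul_le_mul_of_nonneg_left g2 p1)
      _ = _ := by field_simp; ring
  refine (Finset.sum_le_sum step).trans ?_
  rw [Finset.sum_sub_distrib, ← Finset.mul_sum, ← Finset.mul_sum, bq_sum, drift_eq m hm]
  have e3 : Z + 2 * m - 2 * m = Z := by omega
  rw [e3]
  have hd : 2 * m * z ≤ 2 * m * (z + polyP m p z) := by
    apply mul_le_mul_of_nonneg_left _ (by positivity); linarith
  have hd2 := mul_le_mul_of_nonneg_left hd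
    (show 0 ≤ (S + 2 * m) / Z / (Z + 2 * m) by positivity)
  have e4 : (S + 2 * m) / Z / (Z + 2 * m) * (2 * m * z) = (S + 2 * m) / Z * (2 * m / S) := by
    rw [hz]; push_cast; field_simp
  rw [e4] at hd2
  have e5 : (S + 2 * m) / Z * 1 - (S + 2 * m) / Z * (2 * m / S) = S / Z - 4 * m ^ 2 / (S * Z) := by
    field_simp; ring
  have : 0 ≤ 4 * (m : ℝ) ^ 2 / (S * Z) := by positivity
  linarith

namespace PAProcess

variable {Ω : Type} [MeasurableSpace Ω] (P : PAProcess Ω)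

instance instProb : IsProbabilityMeasure P.μ := P.isProb

def Rd (n k : ℕ) : Set Ω := {ω | P.A (n + 1) ω = P.A n ω + 1 ∧ P.X (n + 1) ω = P.X n ω + k + P.m}
def Bl (n k : ℕ) : Set Ω := {ω | P.A (n + 1) ω = P.A n ω ∧ P.X (n + 1) ω = P.X n ω + k}

lemma measA (n : ℕ) : Measurable (P.A n) := (P.adaptedA n).mono (P.F.le n) le_rfl
lemma measX (n : ℕ) : Measurable (P.X n) := (P.adaptedX n).mono (P.F.le n) le_rfl

lemma measRd (n k : ℕ) : MeasurableSet (P.Rd n k) :=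
  (measurableSet_eq_fun (P.measA _) ((P.measA n).add_const 1)).inter
    (measurableSet_eq_fun (P.measX _) (((P.measX n).add_const k).add_const P.m))

lemma measBl (n k : ℕ) : MeasurableSet (P.Bl n k) :=
  (measurableSet_eq_fun (P.measA _) (P.measA n)).inter
    (measurableSet_eq_fun (P.measX _) ((P.measX n).add_const k))

lemma S_cast (n : ℕ) : (P.S n : ℝ) = (P.X0 : ℝ) + P.Y0 + 2 * P.m * n := by
  simp [S]

lemma S_succ (n : ℕ) : (P.S (n + 1) : ℝ) = P.S n + 2 * P.m := by
  simp [S]; ring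

lemma x_nonneg (n : ℕ) (ω : Ω) : 0 ≤ P.x n ω := by unfold x; positivity
lemma x_le_one (n : ℕ) (ω : Ω) : P.x n ω ≤ 1 := by
  unfold x
  apply div_le_one_of_le₀ _ (by positivity)
  exact_mod_cast P.hXle n ω

lemma sm_of_X (n : ℕ) (f : ℕ → ℝ) : StronglyMeasurable[P.F n] (fun ω => f (P.X n ω)) := by
  have : Measurable[P.F n] (fun ω => f (P.X n ω)) :=
    (Measurable.of_discrete (f := f)).comp (P.adaptedX n)
  exact this.stronglyMeasurable

lemma condRd (n k : ℕ) (hk : k ≤ P.m) : P.μ[(P.Rd n k).indicator (fun _ => (1 : ℝ)) | P.F n]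
    =ᵐ[P.μ] fun ω => bq P.m k (P.x n ω) * P.p k := by
  have := P.step_red n k hk
  simp only [x, bq, S_cast]
  exact this

lemma condBl (n k : ℕ) (hk : k ≤ P.m) : P.μ[(P.Bl n k).indicator (fun _ => (1 : ℝ)) | P.F n]
    =ᵐ[P.μ] fun ω => bq P.m k (P.x n ω) * (1 - P.p k) := by
  have := P.step_blue n k hk
  simp only [x, bq, S_cast]
  exact this

lemma integ_ind {s : Set Ω} (hs : MeasurableSet s) :
    Integrable (s.indicator (fun _ => (1 : ℝ))) P.μ :=
  (integrable_const 1).indicator hs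

lemma sum_ind_one {n : ℕ} {ω : Ω} (h : ∃ k ≤ P.m, ω ∈ P.Rd n k ∨ ω ∈ P.Bl n k)
    (r b : ℕ → ℝ) (Y : ℝ) (hr : ∀ k ≤ P.m, ω ∈ P.Rd n k → Y = r k)
    (hb : ∀ k ≤ P.m, ω ∈ P.Bl n k → Y = b k) :
    Y = ∑ k ∈ Finset.range (P.m + 1), (r k * (P.Rd n k).indicator (fun _ => (1 : ℝ)) ω +
      b k * (P.Bl n k).indicator (fun _ => (1 : ℝ)) ω) := by
  obtain ⟨j, hj, h | h⟩ := h
  · have h1 : ∀ k, (P.Rd n k).indicator (fun _ => (1 : ℝ)) ω = if k = j then 1 else 0 := by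
      intro k
      have hiff : ω ∈ P.Rd n k ↔ k = j := by
        simp only [Rd, mem_ofPred_eq] at h ⊢
        omega
      by_cases hkj : k = j
      · rw [if_pos hkj, indicator_of_mem (hiff.2 hkj)]
      · rw [if_neg hkj, indicator_of_notMem (fun h => hkj (hiff.1 h))]
    have h2 : ∀ k, (P.Bl n k).indicator (fun _ => (1 : ℝ)) ω = 0 := by
      intro k
      apply indicator_of_notMem
      simp only [Bl, Rd, mem_ofPred_eq] at h ⊢
      omega
    simp [h1, h2, hr j hj h]
    omega
  · have h1 : ∀ k, (P.Bl n k).indicator (fun _ => (1 : ℝ)) ω = if k = j then 1 else 0 := by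
      intro k
      have hiff : ω ∈ P.Bl n k ↔ k = j := by
        simp only [Bl, mem_ofPred_eq] at h ⊢
        omega
      by_cases hkj : k = j
      · rw [if_pos hkj, indicator_of_mem (hiff.2 hkj)]
      · rw [if_neg hkj, indicator_of_notMem (fun h => hkj (hiff.1 h))]
    have h2 : ∀ k, (P.Rd n k).indicator (fun _ => (1 : ℝ)) ω = 0 := by
      intro k
      apply indicator_of_notMem
      simp only [Bl, Rd, mem_ofPred_eq] at h ⊢
      omega
    simp [h1, h2, hb j hj h]
    omega

lemma cond_sum (n : ℕ) (r b : ℕ → Ω → ℝ)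
    (hrm : ∀ k, StronglyMeasurable[P.F n] (r k)) (hbm : ∀ k, StronglyMeasurable[P.F n] (b k))
    (C : ℝ) (hrC : ∀ k ≤ P.m, ∀ ω, |r k ω| ≤ C) (hbC : ∀ k ≤ P.m, ∀ ω, |b k ω| ≤ C) :
    P.μ[fun ω => ∑ k ∈ Finset.range (P.m + 1),
        (r k ω * (P.Rd n k).indicator (fun _ => (1 : ℝ)) ω +
          b k ω * (P.Bl n k).indicator (fun _ => (1 : ℝ)) ω) | P.F n] =ᵐ[P.μ]
      fun ω => ∑ k ∈ Finset.range (P.m + 1),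
        bq P.m k (P.x n ω) * (P.p k * r k ω + (1 - P.p k) * b k ω) := by
  have hi : ∀ (f : Ω → ℝ) (s : Set Ω), StronglyMeasurable[P.F n] f → (∀ ω, |f ω| ≤ C) →
      MeasurableSet s → Integrable (f * s.indicator (fun _ => (1 : ℝ))) P.μ := by
    intro f s hf hC hs
    have : f * s.indicator (fun _ => (1 : ℝ)) = s.indicator f := by
      ext ω; by_cases h : ω ∈ s <;> simp [h]
    rw [this]
    exact (Integrable.of_bound (hf.mono (P.F.le n)).aestronglyMeasurable C
      (Eventually.of_forall hC)).indicator hs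
  have h1 : ∀ k ∈ Finset.range (P.m + 1),
      P.μ[r k * (P.Rd n k).indicator (fun _ => (1 : ℝ)) +
          b k * (P.Bl n k).indicator (fun _ => (1 : ℝ)) | P.F n] =ᵐ[P.μ]
      fun ω => bq P.m k (P.x n ω) * (P.p k * r k ω + (1 - P.p k) * b k ω) := by
    intro k hk
    have hk' : k ≤ P.m := by simpa [Nat.lt_succ_iff] using hk
    have i1 := hi _ _ (hrm k) (hrC k hk') (P.measRd n k)
    have i2 := hi _ _ (hbm k) (hbC k hk') (P.measBl n k)
    filter_upwards [condExp_add i1 i2 (P.F n),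
      condExp_mul_of_stronglyMeasurable_left (hrm k) i1 (P.integ_ind (P.measRd n k)),
      condExp_mul_of_stronglyMeasurable_left (hbm k) i2 (P.integ_ind (P.measBl n k)),
      P.condRd n k hk', P.condBl n k hk'] with ω a1 a2 a3 a4 a5
    rw [a1, Pi.add_apply, a2, a3, Pi.mul_apply, Pi.mul_apply, a4, a5]
    ring
  have h2 := condExp_finsetSum (μ := P.μ) (s := Finset.range (P.m + 1))
    (f := fun k => r k * (P.Rd n k).indicator (fun _ => (1 : ℝ)) +
          b k * (P.Bl n k).indicator (fun _ => (1 : ℝ))) (fun k hk => by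
      have hk' : k ≤ P.m := by simpa [Nat.lt_succ_iff] using hk
      exact (hi _ _ (hrm k) (hrC k hk') (P.measRd n k)).add
        (hi _ _ (hbm k) (hbC k hk') (P.measBl n k))) (P.F n)
  have h3 : ∀ᵐ ω ∂P.μ, ∀ k ∈ Finset.range (P.m + 1),
      (P.μ[r k * (P.Rd n k).indicator (fun _ => (1 : ℝ)) +
          b k * (P.Bl n k).indicator (fun _ => (1 : ℝ)) | P.F n]) ω =
       bq P.m k (P.x n ω) * (P.p k * r k ω + (1 - P.p k) * b k ω) :=
    (Finset.eventually_all _).2 h1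
  have h4 : (fun ω => ∑ k ∈ Finset.range (P.m + 1),
        (r k ω * (P.Rd n k).indicator (fun _ => (1 : ℝ)) ω +
          b k ω * (P.Bl n k).indicator (fun _ => (1 : ℝ)) ω)) =
      ∑ k ∈ Finset.range (P.m + 1), (r k * (P.Rd n k).indicator (fun _ => (1 : ℝ)) +
          b k * (P.Bl n k).indicator (fun _ => (1 : ℝ))) := by
    ext ω; simp
  rw [h4]
  filter_upwards [h2, h3] with ω a1 a2
  rw [a1, Finset.sum_apply]
  exact Finset.sum_congr rfl a2

lemma ae_step : ∀ᵐ ω ∂P.μ, ∀ n, ∃ k ≤ P.m, ω ∈ P.Rd n k ∨ ω ∈ P.Bl n k := by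
  rw [ae_all_iff]
  intro n
  set f : Ω → ℝ := fun ω => ∑ k ∈ Finset.range (P.m + 1),
        (1 * (P.Rd n k).indicator (fun _ => (1 : ℝ)) ω +
          1 * (P.Bl n k).indicator (fun _ => (1 : ℝ)) ω) with hf
  have hc := P.cond_sum n (fun _ _ => 1) (fun _ _ => 1) (fun _ => stronglyMeasurable_const)
    (fun _ => stronglyMeasurable_const) 1 (by simp) (by simp)
  have hc1 : P.μ[f | P.F n] =ᵐ[P.μ] fun _ => (1 : ℝ) := by
    filter_upwards [hc] with ω h
    rw [h]
    simp [bq_sum]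
  have hfi : Integrable f P.μ := by
    refine integrable_finsetSum _ fun k _ => ?_
    exact ((P.integ_ind (P.measRd n k)).const_mul 1).add ((P.integ_ind (P.measBl n k)).const_mul 1)
  have hint : ∫ ω, f ω ∂P.μ = 1 := by
    rw [← integral_condExp (P.F.le n), integral_congr_ae hc1]; simp
  have hle : ∀ ω, f ω ≤ 1 := by
    intro ω
    by_cases h : ∃ k ≤ P.m, ω ∈ P.Rd n k ∨ ω ∈ P.Bl n k
    · exact (P.sum_ind_one h (fun _ => 1) (fun _ => 1) 1 (by simp) (by simp)).ge
    · push Not at h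
      have : f ω = 0 := by
        refine Finset.sum_eq_zero fun k hk => ?_
        have hk' : k ≤ P.m := by simpa [Nat.lt_succ_iff] using hk
        simp [h k hk']
      rw [this]; exact zero_le_one
  have h0 : (fun ω => 1 - f ω) =ᵐ[P.μ] 0 := by
    rw [← integral_eq_zero_iff_of_nonneg (fun ω => sub_nonneg.2 (hle ω))
      ((integrable_const 1).sub hfi), integral_sub (integrable_const 1) hfi, hint]
    simp
  filter_upwards [h0] with ω h
  by_contra hn
  push Not at hn
  have : f ω = 0 := by
    refine Finset.sum_eq_zero fun k hk => ?_
    have hk' : k ≤ P.m := by simpa [Nat.lt_succ_iff] using hk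
    simp [hn k hk']
  simp [this] at h

lemma cond_step (n : ℕ) (Y : Ω → ℝ) (r b : ℕ → Ω → ℝ)
    (hrm : ∀ k, StronglyMeasurable[P.F n] (r k)) (hbm : ∀ k, StronglyMeasurable[P.F n] (b k))
    (C : ℝ) (hrC : ∀ k ≤ P.m, ∀ ω, |r k ω| ≤ C) (hbC : ∀ k ≤ P.m, ∀ ω, |b k ω| ≤ C)
    (hr : ∀ k ≤ P.m, ∀ ω ∈ P.Rd n k, Y ω = r k ω)
    (hb : ∀ k ≤ P.m, ∀ ω ∈ P.Bl n k, Y ω = b k ω) :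
    P.μ[Y | P.F n] =ᵐ[P.μ] fun ω => ∑ k ∈ Finset.range (P.m + 1),
        bq P.m k (P.x n ω) * (P.p k * r k ω + (1 - P.p k) * b k ω) := by
  refine (condExp_congr_ae ?_).trans (P.cond_sum n r b hrm hbm C hrC hbC)
  filter_upwards [P.ae_step] with ω h
  exact P.sum_ind_one (h n) (fun k => r k ω) (fun k => b k ω) _ (fun k hk => hr k hk ω)
    (fun k hk => hb k hk ω)

lemma ae_mono : ∀ᵐ ω ∂P.μ, Monotone (fun n => P.X n ω) := by
  filter_upwards [P.ae_step] with ω h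
  refine monotone_nat_of_le_succ fun n => ?_
  obtain ⟨k, _, h | h⟩ := h n <;> simp only [Rd, Bl, mem_ofPred_eq] at h <;> omega

lemma ae_unbounded (hX0 : 0 < P.X0) (K : ℕ) :
    ∀ᵐ ω ∂P.μ, ∃ N, K < P.X N ω := by
  have hm := P.hm
  have hs : ∀ n, MeasurableSet[P.F n] {ω | P.X (n - 1) ω < P.X n ω} := by
    intro n
    have h1 : Measurable[P.F n] (P.X (n - 1)) :=
      (P.adaptedX (n - 1)).mono (P.F.mono (Nat.sub_le n 1)) le_rfl
    exact @measurableSet_lt _ _ _ _ _ (P.F n) _ _ _ _ _ h1 (P.adaptedX n)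
  have hBC := ae_mem_limsup_atTop_iff P.μ hs
  have hcond : ∀ᵐ ω ∂P.μ, ∀ n, 1 - bq P.m 0 (P.x n ω) * (1 - P.p 0) =
      (P.μ[({ω | P.X (n + 1 - 1) ω < P.X (n + 1) ω}).indicator (1 : Ω → ℝ) | P.F n]) ω := by
    rw [ae_all_iff]
    intro n
    have := P.cond_step n (({ω | P.X (n + 1 - 1) ω < P.X (n + 1) ω}).indicator (1 : Ω → ℝ))
      (fun _ _ => 1) (fun k _ => if k = 0 then 0 else 1) (fun _ => stronglyMeasurable_const)
      (fun _ => stronglyMeasurable_const) 1 (by simp)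
      (by intro k _ ω; split_ifs <;> simp)
      (by
        intro k hk ω h
        apply indicator_of_mem
        simp only [Rd, mem_ofPred_eq, Nat.add_sub_cancel] at h ⊢
        omega)
      (by
        intro k hk ω h
        simp only [Bl, mem_ofPred_eq] at h
        rw [indicator_apply]
        by_cases hk0 : k = 0
        · simp [h.2, hk0]
        · simp [h.2, hk0])
    filter_upwards [this] with ω h
    rw [h]
    have h1 := bq_sum P.m (P.x n ω)
    rw [Finset.sum_range_succ'] at h1 ⊢
    simp
    linarith
  filter_upwards [P.ae_step, P.ae_mono, hBC, hcond] with ω hst hmono hbc hc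
  have hlim : ω ∈ limsup (fun n => {ω | P.X (n - 1) ω < P.X n ω}) atTop := by
    rw [hbc]
    have hS0 : (0 : ℝ) ≤ P.S 0 := by positivity
    refine tendsto_atTop_mono (fun n => ?_) (harm_lemma (P.S 0) (2 * P.m) 1 hS0
      (by positivity) one_pos)
    refine Finset.sum_le_sum fun i _ => ?_
    rw [← hc i]
    have hx0 := P.x_nonneg i ω
    have hx1 := P.x_le_one i ω
    have hp0 := P.hp 0 (Nat.zero_le _)
    have hb : bq P.m 0 (P.x i ω) ≤ 1 - P.x i ω := by
      simp only [bq, Nat.choose_zero_right, Nat.cast_one, pow_zero, mul_one, one_mul, Nat.sub_zero]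
      exact pow_le_of_le_one (by linarith) (by linarith) (by omega)
    have hb0 := bq_nonneg P.m 0 hx0 hx1
    have hX1 : (1 : ℝ) ≤ P.X i ω := by
      have := hmono (Nat.zero_le i)
      simp only [P.hX0] at this
      exact_mod_cast (by omega : 1 ≤ P.X i ω)
    have hSi : (0 : ℝ) < P.S i := by
      have : 0 < P.S i := by unfold S; omega
      exact_mod_cast this
    have hle : 1 / ((P.S 0 : ℝ) + 2 * P.m * (i + 1)) ≤ P.x i ω := by
      unfold x
      apply div_le_div₀ (by positivity) hX1 hSi
      rw [S_cast, S_cast]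
      push_cast
      have : (0 : ℝ) ≤ P.m := by positivity
      linarith
    nlinarith [hp0.1, hp0.2]
  rw [mem_limsup_iff_frequently_mem] at hlim
  by_contra hcon
  push Not at hcon
  -- monotone bounded natural sequence is eventually constant
  have : ∀ j, ∃ N, j ≤ P.X N ω := by
    intro j
    induction j with
    | zero => exact ⟨0, Nat.zero_le _⟩
    | succ j ih =>
      obtain ⟨N, hN⟩ := ih
      obtain ⟨n, hn, hn2⟩ := (frequently_atTop.1 hlim) (N + 1)
      refine ⟨n, ?_⟩
      have h1 := hmono (show N ≤ n - 1 by omega)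
      simp only [mem_ofPred_eq] at hn2 h1
      omega
  obtain ⟨N, hN⟩ := this (K + 1)
  have := hcon N
  omega

def dn (n : ℕ) (ω : Ω) : ℝ :=
  (((P.X (n + 1) ω : ℝ) - P.X n ω) - P.m * ((P.A (n + 1) ω : ℝ) - P.A n ω) - P.m * P.x n ω)
    / P.S (n + 1)

def Nn (n : ℕ) (ω : Ω) : ℝ := ∑ i ∈ Finset.range n, P.dn i ω

lemma S_pos (n : ℕ) : (0 : ℝ) < P.S (n + 1) := by
  have := P.hm
  have : 0 < P.S (n + 1) := by unfold S; positivity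
  exact_mod_cast this

lemma dn_Rd {n k : ℕ} {ω : Ω} (h : ω ∈ P.Rd n k) :
    P.dn n ω = (k - P.m * P.x n ω) / P.S (n + 1) := by
  simp only [Rd, mem_ofPred_eq] at h
  unfold dn
  rw [h.1, h.2]
  push_cast
  congr 1; ring

lemma dn_Bl {n k : ℕ} {ω : Ω} (h : ω ∈ P.Bl n k) :
    P.dn n ω = (k - P.m * P.x n ω) / P.S (n + 1) := by
  simp only [Bl, mem_ofPred_eq] at h
  unfold dn
  rw [h.1, h.2]
  push_cast
  congr 1; ring

lemma dn_bound (n k : ℕ) (hk : k ≤ P.m) (ω : Ω) :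
    |(k - P.m * P.x n ω) / P.S (n + 1)| ≤ 1 / (2 * ((n : ℝ) + 1)) := by
  have hS := P.S_pos n
  have hm : (1 : ℝ) ≤ P.m := by exact_mod_cast P.hm
  have hkr : (k : ℝ) ≤ P.m := by exact_mod_cast hk
  have hk0 : (0 : ℝ) ≤ k := by positivity
  have hx0 := P.x_nonneg n ω
  have hx1 := P.x_le_one n ω
  rw [abs_div, abs_of_pos hS]
  have h1 : |k - P.m * P.x n ω| ≤ P.m := by
    rw [abs_le]; constructor <;> nlinarith
  rw [div_le_div_iff₀ hS (by positivity)]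
  have h2 : 2 * P.m * ((n : ℝ) + 1) ≤ P.S (n + 1) := by
    rw [S_cast]; push_cast
    have : (0 : ℝ) ≤ P.X0 := by positivity
    have : (0 : ℝ) ≤ P.Y0 := by positivity
    linarith
  have hn : (0 : ℝ) ≤ n := by positivity
  nlinarith

lemma ae_dn : ∀ᵐ ω ∂P.μ, ∀ n, |P.dn n ω| ≤ 1 / (2 * ((n : ℝ) + 1)) := by
  filter_upwards [P.ae_step] with ω h n
  obtain ⟨k, hk, h | h⟩ := h n
  · rw [P.dn_Rd h]; exact P.dn_bound n k hk ω
  · rw [P.dn_Bl h]; exact P.dn_bound n k hk ω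

lemma sm_x (n : ℕ) : StronglyMeasurable[P.F n] (P.x n) :=
  P.sm_of_X n (fun j => (j : ℝ) / P.S n)

lemma sm_dn (n : ℕ) : StronglyMeasurable[P.F (n + 1)] (P.dn n) := by
  have hle : P.F n ≤ P.F (n + 1) := P.F.mono (Nat.le_succ n)
  have hA : ∀ n, Measurable[P.F n] (fun ω => (P.A n ω : ℝ)) := fun n =>
    (Measurable.of_discrete (f := fun j : ℕ => (j : ℝ))).comp (P.adaptedA n)
  have hX : ∀ n, Measurable[P.F n] (fun ω => (P.X n ω : ℝ)) := fun n =>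
    (Measurable.of_discrete (f := fun j : ℕ => (j : ℝ))).comp (P.adaptedX n)
  have h1 := hA (n + 1)
  have h2 := (hA n).mono hle le_rfl
  have h3 := hX (n + 1)
  have h4 := (hX n).mono hle le_rfl
  have h5 := ((P.sm_x n).measurable).mono hle le_rfl
  have : Measurable[P.F (n + 1)] (P.dn n) :=
    ((((h3.sub h4).sub ((h1.sub h2).const_mul (P.m : ℝ)))).sub (h5.const_mul (P.m : ℝ))).div_const _
  exact this.stronglyMeasurable

lemma sm_Nn (n : ℕ) : StronglyMeasurable[P.F n] (P.Nn n) := by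
  have : ∀ i ∈ Finset.range n, StronglyMeasurable[P.F n] (P.dn i) := fun i hi =>
    (P.sm_dn i).mono (P.F.mono (by simpa using hi))
  have h := Finset.stronglyMeasurable_fun_sum _ this
  exact h

lemma int_dn (n : ℕ) : Integrable (P.dn n) P.μ := by
  refine Integrable.of_bound ((P.sm_dn n).mono (P.F.le _)).aestronglyMeasurable
    (1 / (2 * ((n : ℝ) + 1))) ?_
  filter_upwards [P.ae_dn] with ω h
  exact h n

lemma cond_dn (n : ℕ) : P.μ[P.dn n | P.F n] =ᵐ[P.μ] 0 := by
  have hsm : ∀ k : ℕ, StronglyMeasurable[P.F n] (fun ω => (k - P.m * P.x n ω) / P.S (n + 1)) := by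
    intro k
    exact P.sm_of_X n (fun j => (k - P.m * ((j : ℝ) / P.S n)) / P.S (n + 1))
  have h := P.cond_step n (P.dn n) (fun k ω => (k - P.m * P.x n ω) / P.S (n + 1))
    (fun k ω => (k - P.m * P.x n ω) / P.S (n + 1)) hsm hsm _
    (P.dn_bound n) (P.dn_bound n)
    (fun k _ ω h => P.dn_Rd h) (fun k _ ω h => P.dn_Bl h)
  filter_upwards [h] with ω h
  rw [h]
  have h1 := bq_sum P.m (P.x n ω)
  have h2 := bq_sum_mul P.m (P.x n ω)
  calc _ = (∑ k ∈ Finset.range (P.m + 1), bq P.m k (P.x n ω) * k) / P.S (n + 1)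
      - (P.m * P.x n ω / P.S (n + 1)) * ∑ k ∈ Finset.range (P.m + 1), bq P.m k (P.x n ω) := by
        rw [Finset.sum_div, Finset.mul_sum, ← Finset.sum_sub_distrib]
        refine Finset.sum_congr rfl fun k _ => ?_
        ring
    _ = 0 := by rw [h1, h2]; ring

lemma Nn_bound (n : ℕ) : ∃ C, ∀ᵐ ω ∂P.μ, ‖P.Nn n ω‖ ≤ C := by
  refine ⟨∑ i ∈ Finset.range n, 1 / (2 * ((i : ℝ) + 1)), ?_⟩
  filter_upwards [P.ae_dn] with ω h
  exact (Finset.abs_sum_le_sum_abs _ _).trans (Finset.sum_le_sum fun i _ => h i)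

lemma aesm_Nn (n : ℕ) : AEStronglyMeasurable (P.Nn n) P.μ :=
  ((P.sm_Nn n).mono (P.F.le _)).aestronglyMeasurable

lemma int_Nn (n : ℕ) : Integrable (P.Nn n) P.μ := by
  obtain ⟨C, hC⟩ := P.Nn_bound n
  exact Integrable.of_bound (P.aesm_Nn n) C hC

lemma int_Nn_sq (n : ℕ) : Integrable (fun ω => P.Nn n ω ^ 2) P.μ := by
  obtain ⟨C, hC⟩ := P.Nn_bound n
  have : (fun ω => P.Nn n ω ^ 2) = fun ω => P.Nn n ω * P.Nn n ω := by ext; ring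
  rw [this]
  exact (P.int_Nn n).bdd_mul (P.aesm_Nn n) hC

lemma second_moment (n : ℕ) : ∫ ω, P.Nn n ω ^ 2 ∂P.μ ≤ 2 - 1 / ((n : ℝ) + 1) := by
  induction n with
  | zero => simp [Nn]
  | succ n ih =>
    obtain ⟨C, hC⟩ := P.Nn_bound n
    have hcross_i : Integrable (P.Nn n * P.dn n) P.μ := (P.int_dn n).bdd_mul (P.aesm_Nn n) hC
    have hcross : ∫ ω, P.Nn n ω * P.dn n ω ∂P.μ = 0 := by
      have h1 := condExp_mul_of_stronglyMeasurable_left (P.sm_Nn n) hcross_i (P.int_dn n)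
      have h2 : P.μ[P.Nn n * P.dn n | P.F n] =ᵐ[P.μ] 0 := by
        filter_upwards [h1, P.cond_dn n] with ω a b
        rw [a, Pi.mul_apply, b]; simp
      have h3 := integral_condExp (P.F.le n) (μ := P.μ) (f := P.Nn n * P.dn n)
      rw [integral_congr_ae h2] at h3
      simpa using h3.symm
    have hle : ∫ ω, P.Nn (n + 1) ω ^ 2 ∂P.μ ≤
        ∫ ω, (P.Nn n ω ^ 2 + 2 * (P.Nn n ω * P.dn n ω) + (1 / (2 * ((n : ℝ) + 1))) ^ 2) ∂P.μ := by
      refine integral_mono_ae (P.int_Nn_sq _)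
        (((P.int_Nn_sq n).add (hcross_i.const_mul 2)).add (integrable_const _)) ?_
      filter_upwards [P.ae_dn] with ω h
      have h' := sq_le_sq' (neg_le_of_abs_le (h n)) (le_of_abs_le (h n))
      have e : P.Nn (n + 1) ω = P.Nn n ω + P.dn n ω := by
        simp [Nn, Finset.sum_range_succ]
      rw [e]
      nlinarith
    have e1 : ∫ ω, (P.Nn n ω ^ 2 + 2 * (P.Nn n ω * P.dn n ω) + (1 / (2 * ((n : ℝ) + 1))) ^ 2) ∂P.μ
        = ∫ ω, P.Nn n ω ^ 2 ∂P.μ + (1 / (2 * ((n : ℝ) + 1))) ^ 2 := by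
      have i1 : Integrable (fun ω => 2 * (P.Nn n ω * P.dn n ω)) P.μ := hcross_i.const_mul 2
      have i2 : Integrable (fun ω => P.Nn n ω ^ 2 + 2 * (P.Nn n ω * P.dn n ω)) P.μ :=
        (P.int_Nn_sq n).add i1
      rw [integral_add i2 (integrable_const _),
        integral_add (P.int_Nn_sq n) i1, integral_const_mul, hcross]
      simp
    rw [e1] at hle
    have h3 : (1 / (2 * ((n : ℝ) + 1))) ^ 2 ≤ 1 / ((n : ℝ) + 1) - 1 / ((n : ℝ) + 1 + 1) := by
      rw [div_sub_div _ _ (by positivity) (by positivity), div_pow,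
        div_le_div_iff₀ (by positivity) (by positivity)]
      have : (0 : ℝ) ≤ n := by positivity
      nlinarith [mul_nonneg this this, mul_nonneg (mul_nonneg this this) this]
    push_cast
    linarith

lemma ae_Nn_tendsto : ∀ᵐ ω ∂P.μ, ∃ c, Tendsto (fun n => P.Nn n ω) atTop (nhds c) := by
  have hmart : Martingale P.Nn P.F P.μ := by
    refine martingale_of_condExp_sub_eq_zero_nat P.sm_Nn P.int_Nn fun n => ?_
    have : P.Nn (n + 1) - P.Nn n = P.dn n := by
      ext ω; simp [Nn, Finset.sum_range_succ]
    rw [this]; exact P.cond_dn n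
  refine hmart.submartingale.exists_ae_tendsto_of_bdd (R := 3) fun n => ?_
  rw [eLpNorm_one_eq_lintegral_enorm, ← ofReal_integral_norm_eq_lintegral_enorm (P.int_Nn n)]
  have h1 : ∫ ω, ‖P.Nn n ω‖ ∂P.μ ≤ ∫ ω, (1 + P.Nn n ω ^ 2) ∂P.μ := by
    refine integral_mono (P.int_Nn n).norm ((integrable_const _).add (P.int_Nn_sq n)) fun ω => ?_
    simp only [Real.norm_eq_abs]
    nlinarith [sq_abs (P.Nn n ω), sq_nonneg (|P.Nn n ω| - 1), abs_nonneg (P.Nn n ω)]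
  rw [integral_add (integrable_const _) (P.int_Nn_sq n)] at h1
  have h2 := P.second_moment n
  have h3 : (0 : ℝ) ≤ 1 / ((n : ℝ) + 1) := by positivity
  have h4 : ∫ ω, ‖P.Nn n ω‖ ∂P.μ ≤ 3 := by
    simp only [integral_const, probReal_univ, smul_eq_mul, mul_one] at h1; linarith
  exact (ENNReal.ofReal_le_ofReal h4).trans (by simp)

lemma ae_x_tendsto (hX0 : 0 < P.X0) : ∀ᵐ ω ∂P.μ,
    Tendsto (fun n => P.a n ω) atTop (nhds 0) → Tendsto (fun n => P.x n ω) atTop (nhds 0) := by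
  filter_upwards [P.ae_Nn_tendsto] with ω ⟨c, hc⟩ ha
  have hm : (1 : ℝ) ≤ P.m := by exact_mod_cast P.hm
  have hSp : ∀ n, (0 : ℝ) < P.S n := fun n => by
    have : 0 < P.S n := by unfold S; omega
    exact_mod_cast this
  -- A_n / S_n → 0
  have hα : Tendsto (fun n => (P.A n ω : ℝ) / P.S n) atTop (nhds 0) := by
    have h1 : Tendsto (fun n => ((P.A0 : ℝ) + P.B0 + 1) * P.a n ω) atTop (nhds 0) := by
      simpa using ha.const_mul ((P.A0 : ℝ) + P.B0 + 1)
    refine tendsto_of_tendsto_of_tendsto_of_le_of_le' tendsto_const_nhds h1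
      (Eventually.of_forall fun n => by positivity) ?_
    filter_upwards [eventually_ge_atTop 1] with n hn
    have hn' : (1 : ℝ) ≤ n := by exact_mod_cast hn
    unfold a
    have hA : (0 : ℝ) ≤ P.A0 := by positivity
    have hB : (0 : ℝ) ≤ P.B0 := by positivity
    rw [mul_div_assoc', div_le_div_iff₀ (hSp n) (by positivity)]
    have h2 : (n : ℝ) ≤ P.S n := by
      rw [S_cast]
      have : (0 : ℝ) ≤ P.X0 := by positivity
      have : (0 : ℝ) ≤ P.Y0 := by positivity
      nlinarith
    have h3 : (P.A0 : ℝ) + P.B0 + n ≤ ((P.A0 : ℝ) + P.B0 + 1) * P.S n := by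
      nlinarith
    have h4 : (0 : ℝ) ≤ P.A n ω := by positivity
    nlinarith
  set V : ℕ → ℝ := fun n => ((P.X n ω : ℝ) - P.m * P.A n ω) / P.S n with hV
  have hx : ∀ n, P.x n ω = V n + P.m * ((P.A n ω : ℝ) / P.S n) := by
    intro n; simp only [hV, x]; ring
  have hW : Tendsto (fun n => V n - P.Nn n ω + c) atTop (nhds 0) := by
    refine det_lemma _ (fun n => (P.m : ℝ) / P.S (n + 1))
      (fun n => P.m * ((P.A n ω : ℝ) / P.S n) - P.Nn n ω + c) (fun n => by positivity) ?_ ?_ ?_ ?_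
    · intro n
      rw [div_le_one (hSp _), S_cast]; push_cast
      have : (0 : ℝ) ≤ P.X0 := by positivity
      have : (0 : ℝ) ≤ P.Y0 := by positivity
      have : (0 : ℝ) ≤ P.m * n := by positivity
      linarith
    · have := harm_lemma ((P.X0 : ℝ) + P.Y0) (2 * P.m) P.m (by positivity) (by positivity)
        (by positivity)
      refine this.congr fun n => Finset.sum_congr rfl fun i _ => ?_
      rw [S_cast]; push_cast; rfl
    · have := ((hα.const_mul (P.m : ℝ)).sub hc).add_const c
      simpa using this
    · intro n
      have e : P.Nn (n + 1) ω = P.Nn n ω + P.dn n ω := by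
        simp [Nn, Finset.sum_range_succ]
      have hs := P.S_succ n
      have h0 := (hSp n).ne'
      have h1 := (hSp (n + 1)).ne'
      have e2 : V (n + 1) = V n * (P.S n / P.S (n + 1)) + (P.m * P.x n ω) / P.S (n + 1)
          + P.dn n ω := by
        simp only [hV, dn]; field_simp; ring
      have e3 : (P.S n : ℝ) / P.S (n + 1) = 1 - 2 * (P.m / P.S (n + 1)) := by
        field_simp; linarith
      rw [e, e2, e3, hx]
      ring
  have hVt : Tendsto V atTop (nhds 0) := by
    have := (hW.add hc).sub_const c
    simp only [zero_add, sub_self] at this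
    exact this.congr fun n => by ring
  have := hVt.add (hα.const_mul (P.m : ℝ))
  simp only [mul_zero, add_zero] at this
  exact this.congr fun n => (hx n).symm

def Gs (N : ℕ) (ε : ℝ) (n : ℕ) : Set Ω :=
  {ω | 2 * P.m < P.X N ω ∧ ∀ i, N ≤ i → i < n → P.x i ω < ε}

def Ln (N : ℕ) (ε : ℝ) (n : ℕ) : Ω → ℝ :=
  (P.Gs N ε n).indicator (fun ω => (P.S n : ℝ) / ((P.X n ω - 2 * P.m : ℕ) : ℝ))

lemma meas_Gs (N : ℕ) (ε : ℝ) (n : ℕ) (hn : N ≤ n) : MeasurableSet[P.F n] (P.Gs N ε (n + 1)) := by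
  have h1 : MeasurableSet[P.F n] {ω | 2 * P.m < P.X N ω} := by
    have hX : Measurable[P.F n] (P.X N) := (P.adaptedX N).mono (P.F.mono hn) le_rfl
    exact hX (MeasurableSet.of_discrete (s := Set.Ioi (2 * P.m)))
  have h2 : MeasurableSet[P.F n] (⋂ i ∈ Finset.range (n + 1), {ω | N ≤ i → P.x i ω < ε}) := by
    refine Finset.measurableSet_biInter _ fun i hi => ?_
    have hi' : i ≤ n := by simpa [Nat.lt_succ_iff] using hi
    by_cases hN : N ≤ i
    · have : Measurable[P.F n] (P.x i) := (P.sm_x i).measurable.mono (P.F.mono hi') le_rfl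
      have h3 := this (measurableSet_Iio (a := ε))
      convert h3 using 1
      ext ω; simp [hN]
    · have : {ω | N ≤ i → P.x i ω < ε} = Set.univ := by ext ω; simp [hN]
      rw [this]; exact MeasurableSet.univ
  have := h1.inter h2
  convert this using 1
  ext ω
  simp only [Gs, mem_ofPred_eq, mem_inter_iff, mem_iInter, Finset.mem_range]
  constructor
  · rintro ⟨a, b⟩; exact ⟨a, fun i hi hN => b i hN hi⟩
  · rintro ⟨a, b⟩; exact ⟨a, fun i hN hi => b i hi hN⟩

lemma div_nat_bound (s : ℝ) (hs : 0 ≤ s) (j : ℕ) : |s / (j : ℝ)| ≤ s := by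
  rw [abs_of_nonneg (by positivity)]
  rcases Nat.eq_zero_or_pos j with rfl | h
  · simpa using hs
  · exact div_le_self hs (by exact_mod_cast h)

lemma Ln_bound (N : ℕ) (ε : ℝ) (n : ℕ) (ω : Ω) : |P.Ln N ε n ω| ≤ P.S n := by
  unfold Ln
  by_cases h : ω ∈ P.Gs N ε n
  · rw [indicator_of_mem h]; exact div_nat_bound _ (by positivity) _
  · rw [indicator_of_notMem h]; simp

lemma Ln_nonneg (N : ℕ) (ε : ℝ) (n : ℕ) (ω : Ω) : 0 ≤ P.Ln N ε n ω :=
  indicator_nonneg (fun _ _ => by positivity) _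

lemma meas_Gs' (N : ℕ) (ε : ℝ) (n : ℕ) (hn : N ≤ n) : MeasurableSet (P.Gs N ε n) := by
  rcases Nat.lt_or_ge N n with h | h
  · obtain ⟨k, rfl⟩ : ∃ k, n = k + 1 := ⟨n - 1, by omega⟩
    exact P.F.le _ _ (P.meas_Gs N ε k (by omega))
  · have : P.Gs N ε n = P.X N ⁻¹' (Set.Ioi (2 * P.m)) := by
      ext ω
      simp only [Gs, mem_ofPred_eq, mem_preimage, mem_Ioi]
      exact ⟨fun h => h.1, fun h' => ⟨h', fun i _ _ => by omega⟩⟩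
    rw [this]
    exact P.measX N (MeasurableSet.of_discrete)

lemma meas_Ln (N : ℕ) (ε : ℝ) (n : ℕ) (hn : N ≤ n) : Measurable (P.Ln N ε n) := by
  refine Measurable.indicator ?_ (P.meas_Gs' N ε n hn)
  exact ((P.sm_of_X n (fun j => (P.S n : ℝ) / ((j - 2 * P.m : ℕ) : ℝ))).mono (P.F.le n)).measurable

lemma int_Ln (N : ℕ) (ε : ℝ) (n : ℕ) (hn : N ≤ n) : Integrable (P.Ln N ε n) P.μ :=
  Integrable.of_bound (P.meas_Ln N ε n hn).aestronglyMeasurable _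
    (Eventually.of_forall (P.Ln_bound N ε n))

lemma Ln_step (N : ℕ) (ε : ℝ) (hε : ∀ y ∈ Set.Ioo (0 : ℝ) ε, 0 < P.poly y) (n : ℕ) (hn : N ≤ n) :
    ∫ ω, P.Ln N ε (n + 1) ω ∂P.μ ≤ ∫ ω, P.Ln N ε n ω ∂P.μ := by
  rw [← integral_condExp (P.F.le n)]
  refine integral_mono_ae integrable_condExp (P.int_Ln N ε n hn) ?_
  have hG := P.meas_Gs N ε n hn
  have hsm : ∀ f : ℕ → ℝ, StronglyMeasurable[P.F n]
      ((P.Gs N ε (n + 1)).indicator (fun ω => f (P.X n ω))) :=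
    fun f => (P.sm_of_X n f).indicator hG
  have hbd : ∀ (f : ℕ → ℕ) (ω : Ω), |(P.Gs N ε (n + 1)).indicator
      (fun ω => (P.S (n + 1) : ℝ) / (f (P.X n ω) : ℝ)) ω| ≤ P.S (n + 1) := by
    intro f ω
    by_cases h : ω ∈ P.Gs N ε (n + 1)
    · rw [indicator_of_mem h]; exact div_nat_bound _ (by positivity) _
    · rw [indicator_of_notMem h]; simp
  have hc := P.cond_step n (P.Ln N ε (n + 1))
    (fun k => (P.Gs N ε (n + 1)).indicator
      (fun ω => (P.S (n + 1) : ℝ) / ((P.X n ω + k + P.m - 2 * P.m : ℕ) : ℝ)))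
    (fun k => (P.Gs N ε (n + 1)).indicator
      (fun ω => (P.S (n + 1) : ℝ) / ((P.X n ω + k - 2 * P.m : ℕ) : ℝ)))
    (fun k => hsm (fun j => (P.S (n + 1) : ℝ) / ((j + k + P.m - 2 * P.m : ℕ) : ℝ)))
    (fun k => hsm (fun j => (P.S (n + 1) : ℝ) / ((j + k - 2 * P.m : ℕ) : ℝ)))
    (P.S (n + 1)) (fun k _ => hbd (fun j => j + k + P.m - 2 * P.m))
    (fun k _ => hbd (fun j => j + k - 2 * P.m))
    (by
      intro k hk ω h
      simp only [Rd, mem_ofPred_eq] at h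
      by_cases hg : ω ∈ P.Gs N ε (n + 1)
      · simp only [Ln, indicator_of_mem hg, h.2]
      · simp only [Ln, indicator_of_notMem hg])
    (by
      intro k hk ω h
      simp only [Bl, mem_ofPred_eq] at h
      by_cases hg : ω ∈ P.Gs N ε (n + 1)
      · simp only [Ln, indicator_of_mem hg, h.2]
      · simp only [Ln, indicator_of_notMem hg])
  filter_upwards [hc, P.ae_mono] with ω h hmono
  rw [h]
  by_cases hg : ω ∈ P.Gs N ε (n + 1)
  · have hg' : ω ∈ P.Gs N ε n := ⟨hg.1, fun i h1 h2 => hg.2 i h1 (by omega)⟩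
    simp only [Ln, indicator_of_mem hg, indicator_of_mem hg', S_succ]
    have hX : 2 * P.m < P.X n ω := lt_of_lt_of_le hg.1 (hmono hn)
    have hXS : (P.X n ω : ℝ) ≤ P.S n := by exact_mod_cast P.hXle n ω
    have hXp : (0 : ℝ) < P.X n ω := by exact_mod_cast (by omega : 0 < P.X n ω)
    refine super_ineq P.m P.hm P.p P.hp (P.X n ω) (P.S n) hX hXS ?_
    refine (hε (P.x n ω) ⟨?_, hg.2 n hn (by omega)⟩).le
    unfold x
    exact div_pos hXp (hXp.trans_le hXS)
  · simp only [indicator_of_notMem hg, mul_zero, add_zero, Finset.sum_const_zero]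
    exact P.Ln_nonneg N ε n ω

lemma ae_not_G (N : ℕ) (ε : ℝ) (hε : ∀ y ∈ Set.Ioo (0 : ℝ) ε, 0 < P.poly y) :
    ∀ᵐ ω ∂P.μ, (∀ n, ω ∈ P.Gs N ε n) → ¬ Tendsto (fun n => P.x n ω) atTop (nhds 0) := by
  have hE : ∀ j, ∫ ω, P.Ln N ε (j + N) ω ∂P.μ ≤ P.S N := by
    intro j
    induction j with
    | zero =>
      have : ∫ ω, P.Ln N ε (0 + N) ω ∂P.μ ≤ ∫ ω, (P.S N : ℝ) ∂P.μ := by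
        rw [zero_add]
        exact integral_mono (P.int_Ln N ε N le_rfl) (integrable_const _)
          (fun ω => le_of_abs_le (P.Ln_bound N ε N ω))
      simpa using this
    | succ j ih =>
      have := P.Ln_step N ε hε (j + N) (by omega)
      rw [show j + 1 + N = j + N + 1 by omega]
      exact this.trans ih
  have hF := lintegral_liminf_le (μ := P.μ) (u := atTop)
    (f := fun j ω => ENNReal.ofReal (P.Ln N ε (j + N) ω))
    (fun j => (P.meas_Ln N ε (j + N) (by omega)).ennreal_ofReal)
  have hlt : ∫⁻ ω, liminf (fun j => ENNReal.ofReal (P.Ln N ε (j + N) ω)) atTop ∂P.μ ≠ ⊤ := by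
    refine ne_top_of_le_ne_top (b := ENNReal.ofReal (P.S N)) ENNReal.ofReal_ne_top (hF.trans ?_)
    refine liminf_le_of_frequently_le' (Frequently.of_forall fun j => ?_)
    rw [← ofReal_integral_eq_lintegral_ofReal (P.int_Ln N ε (j + N) (by omega))
      (Eventually.of_forall (P.Ln_nonneg N ε (j + N)))]
    exact ENNReal.ofReal_le_ofReal (hE j)
  have hae := ae_lt_top (Measurable.liminf fun j =>
    (P.meas_Ln N ε (j + N) (by omega)).ennreal_ofReal) hlt
  filter_upwards [hae, P.ae_mono] with ω h hmono hG hx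
  have htop : Tendsto (fun j => P.Ln N ε (j + N) ω) atTop atTop := by
    have hx' : Tendsto (fun n => P.x n ω) atTop (nhdsWithin 0 (Set.Ioi 0)) := by
      refine tendsto_nhdsWithin_iff.2 ⟨hx, ?_⟩
      filter_upwards [eventually_ge_atTop N] with n hn
      have hX : 2 * P.m < P.X n ω := lt_of_lt_of_le (hG N).1 (hmono hn)
      have hXp : (0 : ℝ) < P.X n ω := by exact_mod_cast (by omega : 0 < P.X n ω)
      have hXS : (P.X n ω : ℝ) ≤ P.S n := by exact_mod_cast P.hXle n ω
      exact div_pos hXp (hXp.trans_le hXS)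
    have h1 : Tendsto (fun j => (P.x (j + N) ω)⁻¹) atTop atTop :=
      (tendsto_inv_nhdsGT_zero.comp hx').comp (tendsto_add_atTop_nat N)
    refine tendsto_atTop_mono (fun j => ?_) h1
    have hX : 2 * P.m < P.X (j + N) ω := lt_of_lt_of_le (hG N).1 (hmono (by omega))
    simp only [Ln, indicator_of_mem (hG (j + N)), x, inv_div]
    apply div_le_div_of_nonneg_left (by positivity)
    · exact_mod_cast (by omega : 0 < P.X (j + N) ω - 2 * P.m)
    · exact_mod_cast Nat.sub_le _ _
  have := (ENNReal.tendsto_ofReal_atTop.comp htop).liminf_eq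
  simp only [Function.comp_def] at this
  rw [this] at h
  exact lt_irrefl _ h

lemma main_zero (hX0 : 0 < P.X0) (h : ∃ ε > (0 : ℝ), ∀ y ∈ Set.Ioo (0 : ℝ) ε, 0 < P.poly y) :
    P.μ {ω | Tendsto (fun n => P.a n ω) atTop (nhds (0 : ℝ))} = 0 := by
  obtain ⟨ε, hε, hP⟩ := h
  have : ∀ᵐ ω ∂P.μ, ¬ Tendsto (fun n => P.a n ω) atTop (nhds (0 : ℝ)) := by
    filter_upwards [P.ae_x_tendsto hX0, P.ae_mono, P.ae_unbounded hX0 (2 * P.m),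
      ae_all_iff.2 (fun N => P.ae_not_G N ε hP)] with ω h1 hmono ⟨K, hK⟩ h3 ha
    have hx := h1 ha
    obtain ⟨M, hM⟩ := eventually_atTop.1 (hx.eventually (gt_mem_nhds hε))
    refine h3 (max K M) (fun n => ⟨?_, fun i hi _ => hM i (le_trans (le_max_right _ _) hi)⟩) hx
    exact lt_of_lt_of_le hK (hmono (le_max_left _ _))
  rw [ae_iff] at this
  simpa using this

lemma ae_A_le : ∀ᵐ ω ∂P.μ, ∀ n, P.A n ω ≤ P.A0 + P.B0 + n := by
  filter_upwards [P.ae_step] with ω h n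
  induction n with
  | zero => rw [P.hA0]; omega
  | succ n ih =>
    obtain ⟨k, _, h | h⟩ := h n <;> simp only [Rd, Bl, mem_ofPred_eq] at h <;> omega

lemma S_pos' (hX0 : 0 < P.X0) (n : ℕ) : (0 : ℝ) < P.S n := by
  have : 0 < P.S n := by unfold S; omega
  exact_mod_cast this

lemma refl_x (hX0 : 0 < P.X0) (n : ℕ) (ω : Ω) :
    ((P.X0 + P.Y0 + 2 * P.m * n - P.X n ω : ℕ) : ℝ) / ((P.Y0 : ℝ) + P.X0 + 2 * P.m * n)
      = 1 - P.x n ω := by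
  have := (P.S_pos' hX0 n).ne'
  rw [Nat.cast_sub (P.hXle n ω)]
  unfold x
  rw [S_cast] at *
  push_cast
  rw [add_comm (P.Y0 : ℝ)]
  field_simp

/-- The colour-reversed process. -/
def reflect (hX0 : 0 < P.X0) : PAProcess Ω where
  μ := P.μ
  isProb := P.isProb
  m := P.m
  hm := P.hm
  p := fun k => 1 - P.p (P.m - k)
  hp := fun k _ => by
    have := P.hp (P.m - k) (Nat.sub_le _ _)
    exact ⟨by linarith [this.2], by linarith [this.1]⟩
  A := fun n ω => P.A0 + P.B0 + n - P.A n ω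
  X := fun n ω => P.X0 + P.Y0 + 2 * P.m * n - P.X n ω
  F := P.F
  A0 := P.B0
  B0 := P.A0
  X0 := P.Y0
  Y0 := P.X0
  hA0 := fun ω => by simp only [P.hA0]; omega
  hX0 := fun ω => by simp only [P.hX0]; omega
  adaptedA := fun n => (Measurable.of_discrete (f := fun j => P.A0 + P.B0 + n - j)).comp
    (P.adaptedA n)
  adaptedX := fun n => (Measurable.of_discrete (f := fun j => P.X0 + P.Y0 + 2 * P.m * n - j)).comp
    (P.adaptedX n)
  hXle := fun n ω => by omega
  step_red := fun n k hk => by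
    refine (condExp_congr_ae ?_).trans ((P.condBl n (P.m - k) (Nat.sub_le _ _)).trans ?_)
    · filter_upwards [P.ae_A_le] with ω hA
      have a1 := hA n
      have a2 := hA (n + 1)
      have x1 := P.hXle n ω
      have x2 := P.hXle (n + 1) ω
      rw [Nat.mul_add] at x2
      simp only [indicator_apply, Bl, mem_ofPred_eq, Nat.mul_add]
      refine if_congr ?_ rfl rfl
      generalize 2 * P.m * n = t at *
      omega
    · refine Eventually.of_forall fun ω => ?_
      simp only [P.refl_x hX0, bq, Nat.choose_symm hk, Nat.sub_sub_self hk, sub_sub_cancel]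
      ring
  step_blue := fun n k hk => by
    refine (condExp_congr_ae ?_).trans ((P.condRd n (P.m - k) (Nat.sub_le _ _)).trans ?_)
    · filter_upwards [P.ae_A_le] with ω hA
      have a1 := hA n
      have a2 := hA (n + 1)
      have x1 := P.hXle n ω
      have x2 := P.hXle (n + 1) ω
      rw [Nat.mul_add] at x2
      simp only [indicator_apply, Rd, mem_ofPred_eq, Nat.mul_add]
      refine if_congr ?_ rfl rfl
      generalize 2 * P.m * n = t at *
      omega
    · refine Eventually.of_forall fun ω => ?_
      simp only [P.refl_x hX0, bq, Nat.choose_symm hk, Nat.sub_sub_self hk, sub_sub_cancel]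
      ring

lemma reflect_poly (hX0 : 0 < P.X0) (y : ℝ) : (P.reflect hX0).poly y = - P.poly (1 - y) := by
  have hm : (P.m : ℝ) ≠ 0 := by have := P.hm; positivity
  simp only [poly, polyP, reflect]
  rw [← Finset.sum_range_reflect, ← mul_neg, ← Finset.sum_neg_distrib]
  congr 1
  refine Finset.sum_congr rfl fun k hk => ?_
  have hk' : k ≤ P.m := by simpa [Nat.lt_succ_iff] using hk
  have e : P.m + 1 - 1 - k = P.m - k := by omega
  rw [e, Nat.choose_symm hk', Nat.sub_sub_self hk', Nat.cast_sub hk', sub_sub_cancel]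
  field_simp
  ring

lemma main_one (hX0 : 0 < P.X0) (hY0 : 0 < P.Y0)
    (h : ∃ ε > (0 : ℝ), ∀ y ∈ Set.Ioo (1 - ε) (1 : ℝ), P.poly y < 0) :
    P.μ {ω | Tendsto (fun n => P.a n ω) atTop (nhds (1 : ℝ))} = 0 := by
  obtain ⟨ε, hε, hP⟩ := h
  have h0 := (P.reflect hX0).main_zero hY0 ⟨ε, hε, fun y hy => by
    rw [reflect_poly]
    have := hP (1 - y) ⟨by linarith [hy.2], by linarith [hy.1]⟩
    linarith⟩
  change P.μ _ = 0 at h0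
  rw [← compl_compl {ω | Tendsto (fun n => P.a n ω) atTop (nhds (1 : ℝ))}, ← mem_ae_iff]
  rw [← compl_compl {ω | Tendsto (fun n => (P.reflect hX0).a n ω) atTop (nhds (0 : ℝ))},
    ← mem_ae_iff] at h0
  filter_upwards [h0, P.ae_A_le] with ω h1 hA h2
  refine h1 ?_
  have h3 : Tendsto (fun n => 1 - P.a n ω) atTop (nhds 0) := by
    simpa using (tendsto_const_nhds (x := (1 : ℝ))).sub h2
  refine h3.congr' ?_
  filter_upwards [eventually_ge_atTop 1] with n hn
  have hn' : (1 : ℝ) ≤ n := by exact_mod_cast hn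
  simp only [a, reflect]
  rw [Nat.cast_sub (hA n), add_comm (P.B0 : ℝ)]
  have : (P.A0 : ℝ) + P.B0 + n ≠ 0 := by positivity
  push_cast
  field_simp

end PAProcess

/-- **Nonlinear models, unstable endpoints.** In a nonlinear model with `X_0, Y_0 > 0`: if
`0 ∈ Z_P` and `P > 0` on `(0, ε)` for some `ε > 0`, then the probability that `a_n → 0` is
zero; and if `1 ∈ Z_P` and `P < 0` on `(1−ε, 1)` for some `ε > 0`, then the probability that
`a_n → 1` is zero. -/
theorem nonlinear_model_unstable_endpoints
    {Ω : Type} [MeasurableSpace Ω] (P : PAProcess Ω)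
    (hnonlin : ∃ k ≤ P.m, P.p k ≠ (k : ℝ) / P.m)
    (hX0 : 0 < P.X0) (hY0 : 0 < P.Y0) :
    (((0 : ℝ) ∈ P.Zp ∧ ∃ ε > (0 : ℝ), ∀ y ∈ Set.Ioo (0 : ℝ) ε, 0 < P.poly y) →
      P.μ {ω | Tendsto (fun n => P.a n ω) atTop (nhds (0 : ℝ))} = 0) ∧
    (((1 : ℝ) ∈ P.Zp ∧ ∃ ε > (0 : ℝ), ∀ y ∈ Set.Ioo (1 - ε) (1 : ℝ), P.poly y < 0) →
      P.μ {ω | Tendsto (fun n => P.a n ω) atTop (nhds (1 : ℝ))} = 0) := by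
  exact ⟨fun h => P.main_zero hX0 h.2, fun h => P.main_one hX0 hY0 h.2⟩
end
end

section
/- In a nonlinear model (p_k ≠ k/m for some 0 ≤ k ≤ m) with X_0 > 0 and Y_0 > 0, if z ∈ Z_P ∩ (0,1) is a touchpoint, i.e., there exists ε > 0 such that P is either strictly positive on (z−ε, z) ∪ (z, z+ε) or strictly negative on (z−ε, z) ∪ (z, z+ε), then P(lim_{n→∞} a_n = z) > 0. -/
open MeasureTheory ProbabilityTheory Filter Set

noncomputable section

theorem md_int_zero {Ω : Type} {mΩ : MeasurableSpace Ω} {μ : Measure Ω} [IsProbabilityMeasure μ]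
    {m : MeasurableSpace Ω} (hm : m ≤ mΩ) {g D : Ω → ℝ} {b d : ℝ}
    (hg : StronglyMeasurable[m] g) (hgb : ∀ ω, |g ω| ≤ b)
    (hD : StronglyMeasurable[mΩ] D) (hDb : ∀ ω, |D ω| ≤ d)
    (h0 : μ[D | m] =ᵐ[μ] 0) : ∫ ω, g ω * D ω ∂μ = 0 := by
  have hDi : Integrable D μ := Integrable.of_bound hD.aestronglyMeasurable d (ae_of_all _ hDb)
  have hgD : Integrable (g * D) μ := by
    refine Integrable.of_bound ((hg.mono hm).mul hD).aestronglyMeasurable (b * d) (ae_of_all _ fun ω => ?_)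
    simp only [Pi.mul_apply, norm_mul, Real.norm_eq_abs]
    exact mul_le_mul (hgb ω) (hDb ω) (abs_nonneg _) ((abs_nonneg _).trans (hgb ω))
  have h1 := condExp_mul_of_stronglyMeasurable_left (μ := μ) hg hgD hDi
  have h2 : ∫ ω, (g * D) ω ∂μ = ∫ ω, (μ[g * D | m]) ω ∂μ := (integral_condExp hm).symm
  have h3 : ∫ ω, (μ[g * D | m]) ω ∂μ = ∫ ω, (0:ℝ) ∂μ := by
    apply integral_congr_ae
    filter_upwards [h1, h0] with ω a b
    rw [a]; simp [b]
  calc _ = ∫ ω, (g * D) ω ∂μ := rfl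
    _ = 0 := by rw [h2, h3]; simp

section MD
variable {Ω : Type} {mΩ : MeasurableSpace Ω} {μ : Measure Ω} [IsProbabilityMeasure μ]
  {F : Filtration ℕ mΩ} {D : ℕ → Ω → ℝ} {d : ℕ → ℝ}

theorem md_meas (hD : ∀ n, StronglyMeasurable[F (n+1)] (D n)) (n : ℕ) :
    StronglyMeasurable[F n] (fun ω => ∑ j ∈ Finset.range n, D j ω) := by
  apply Finset.stronglyMeasurable_fun_sum
  intro i hi
  exact (hD i).mono (F.mono (by simp at hi; omega))

theorem md_bdd (hDb : ∀ n ω, |D n ω| ≤ d n) (n : ℕ) (ω : Ω) :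
    |∑ j ∈ Finset.range n, D j ω| ≤ ∑ j ∈ Finset.range n, d j :=
  (Finset.abs_sum_le_sum_abs _ _).trans (Finset.sum_le_sum fun i _ => hDb i ω)

theorem md_sq_int (hD : ∀ n, StronglyMeasurable[F (n+1)] (D n)) (hDb : ∀ n ω, |D n ω| ≤ d n) (n : ℕ) :
    Integrable (fun ω => (∑ j ∈ Finset.range n, D j ω)^2) μ := by
  refine Integrable.of_bound (((md_meas hD n).mono (F.le n)).pow 2).aestronglyMeasurable
    ((∑ j ∈ Finset.range n, d j)^2) (ae_of_all _ fun ω => ?_)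
  rw [norm_pow, Real.norm_eq_abs]
  exact pow_le_pow_left₀ (abs_nonneg _) (md_bdd hDb n ω) 2

theorem md_set (hD : ∀ n, StronglyMeasurable[F (n+1)] (D n)) (hDb : ∀ n ω, |D n ω| ≤ d n)
    (h0 : ∀ n, μ[D n | F n] =ᵐ[μ] 0) (n : ℕ) (s : Set Ω) (hs : MeasurableSet[F n] s) :
    ∫ ω in s, (∑ j ∈ Finset.range (n+1), D j ω)^2 ∂μ =
      ∫ ω in s, (∑ j ∈ Finset.range n, D j ω)^2 ∂μ + ∫ ω in s, (D n ω)^2 ∂μ := by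
  have hDn := (hD n).mono (F.le (n+1))
  have hM := (md_meas hD n).mono (F.le n)
  have hi1 : Integrable (fun ω => (D n ω)^2) μ := by
    refine Integrable.of_bound (hDn.pow 2).aestronglyMeasurable ((d n)^2) (ae_of_all _ fun ω => ?_)
    rw [norm_pow, Real.norm_eq_abs]
    exact pow_le_pow_left₀ (abs_nonneg _) (hDb n ω) 2
  have hi2 : Integrable (fun ω => (∑ j ∈ Finset.range n, D j ω) * D n ω) μ := by
    refine Integrable.of_bound (hM.mul hDn).aestronglyMeasurable
      ((∑ j ∈ Finset.range n, d j) * d n) (ae_of_all _ fun ω => ?_)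
    rw [norm_mul, Real.norm_eq_abs, Real.norm_eq_abs]
    exact mul_le_mul (md_bdd hDb n ω) (hDb n ω) (abs_nonneg _) ((abs_nonneg _).trans (md_bdd hDb n ω))
  have hz : ∫ ω in s, (∑ j ∈ Finset.range n, D j ω) * D n ω ∂μ = 0 := by
    rw [← integral_indicator (F.le n s hs)]
    have := md_int_zero (μ := μ) (F.le n) (g := s.indicator (fun ω => ∑ j ∈ Finset.range n, D j ω))
      (D := D n) (b := ∑ j ∈ Finset.range n, d j) (d := d n) ((md_meas hD n).indicator hs) ?_ hDn (hDb n) (h0 n)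
    · rw [← this]
      congr 1; ext ω
      by_cases h : ω ∈ s <;> simp [h]
    · intro ω
      by_cases h : ω ∈ s
      · simp only [h, Set.indicator_of_mem]; exact md_bdd hDb n ω
      · simp only [h, not_false_eq_true, Set.indicator_of_notMem, abs_zero]
        exact (abs_nonneg _).trans (md_bdd hDb n ω)
  have : ∀ ω, (∑ j ∈ Finset.range (n+1), D j ω)^2 =
      ((∑ j ∈ Finset.range n, D j ω)^2 + (D n ω)^2) + 2 * ((∑ j ∈ Finset.range n, D j ω) * D n ω) := by
    intro ω; rw [Finset.sum_range_succ]; ring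
  simp only [this]
  rw [integral_add, integral_add, integral_const_mul, hz]
  · ring
  · exact (md_sq_int hD hDb n).integrableOn
  · exact hi1.integrableOn
  · exact ((md_sq_int hD hDb n).add hi1).integrableOn
  · exact (hi2.const_mul 2).integrableOn

theorem md_var (hD : ∀ n, StronglyMeasurable[F (n+1)] (D n)) (hDb : ∀ n ω, |D n ω| ≤ d n)
    (h0 : ∀ n, μ[D n | F n] =ᵐ[μ] 0) (n : ℕ) :
    ∫ ω, (∑ j ∈ Finset.range n, D j ω)^2 ∂μ = ∑ j ∈ Finset.range n, ∫ ω, (D j ω)^2 ∂μ := by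
  induction n with
  | zero => simp
  | succ n ih =>
    have := md_set hD hDb h0 n Set.univ MeasurableSet.univ
    simp only [Measure.restrict_univ] at this
    rw [this, ih, Finset.sum_range_succ]

theorem md_submart (hD : ∀ n, StronglyMeasurable[F (n+1)] (D n)) (hDb : ∀ n ω, |D n ω| ≤ d n)
    (h0 : ∀ n, μ[D n | F n] =ᵐ[μ] 0) :
    Submartingale (fun n ω => (∑ j ∈ Finset.range n, D j ω)^2) F μ := by
  apply submartingale_of_setIntegral_le_succ
  · intro n; exact (md_meas hD n).pow 2
  · exact md_sq_int hD hDb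
  · intro n s hs
    rw [md_set hD hDb h0 n s hs]
    have : 0 ≤ ∫ ω in s, (D n ω)^2 ∂μ := integral_nonneg fun ω => sq_nonneg _
    linarith

theorem md_maximal (hD : ∀ n, StronglyMeasurable[F (n+1)] (D n)) (hDb : ∀ n ω, |D n ω| ≤ d n)
    (h0 : ∀ n, μ[D n | F n] =ᵐ[μ] 0) {V c : ℝ} (hc : 0 < c)
    (hV : ∀ n, ∑ j ∈ Finset.range n, ∫ ω, (D j ω)^2 ∂μ ≤ V) :
    μ {ω | ∃ n, c ≤ |∑ j ∈ Finset.range n, D j ω|} ≤ ENNReal.ofReal (V / c^2) := by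
  set f : ℕ → Ω → ℝ := fun n ω => (∑ j ∈ Finset.range n, D j ω)^2 with hf
  set E : ℕ → Set Ω := fun n => {ω | ∃ k ≤ n, c ≤ |∑ j ∈ Finset.range k, D j ω|} with hE
  have hmono : Monotone E := by
    rintro a b hab ω ⟨k, hk, h⟩; exact ⟨k, hk.trans hab, h⟩
  have hU : {ω | ∃ n, c ≤ |∑ j ∈ Finset.range n, D j ω|} = ⋃ n, E n := by
    ext ω; simp only [hE, Set.mem_ofPred_eq, Set.mem_iUnion]
    constructor
    · rintro ⟨n, h⟩; exact ⟨n, n, le_rfl, h⟩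
    · rintro ⟨n, k, _, h⟩; exact ⟨k, h⟩
  rw [hU, hmono.measure_iUnion]
  refine iSup_le fun n => ?_
  have hc2 : 0 < c^2 := by positivity
  have hset : E n = {ω | (Real.toNNReal (c^2) : ℝ) ≤ (Finset.range (n + 1)).sup' Finset.nonempty_range_add_one fun k => f k ω} := by
    ext ω
    simp only [hE, Set.mem_ofPred_eq, Real.coe_toNNReal _ hc2.le, Finset.le_sup'_iff, Finset.mem_range, hf]
    refine exists_congr fun k => and_congr (by omega) ?_
    rw [← sq_abs (∑ j ∈ Finset.range k, D j ω)]
    exact (pow_le_pow_iff_left₀ hc.le (abs_nonneg _) two_ne_zero).symm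
  have key : ENNReal.ofReal (c^2) * μ (E n) ≤ ENNReal.ofReal (∫ ω in E n, f n ω ∂μ) := by
    rw [hset]
    exact maximal_ineq (md_submart hD hDb h0) (fun n ω => sq_nonneg _) (ε := Real.toNNReal (c^2)) n
  have h2 : ∫ ω in E n, f n ω ∂μ ≤ V := by
    refine le_trans (setIntegral_le_integral (md_sq_int hD hDb n) (ae_of_all _ fun ω => sq_nonneg _)) ?_
    rw [md_var hD hDb h0 n]; exact hV n
  have key2 := key.trans (ENNReal.ofReal_le_ofReal h2)
  rw [ENNReal.ofReal_div_of_pos hc2, ENNReal.le_div_iff_mul_le (by left; simp [hc.ne']) (by left; simp), mul_comm]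
  exact key2

theorem md_conv (hD : ∀ n, StronglyMeasurable[F (n+1)] (D n)) (hDb : ∀ n ω, |D n ω| ≤ d n)
    (h0 : ∀ n, μ[D n | F n] =ᵐ[μ] 0) {V : ℝ}
    (hV : ∀ n, ∑ j ∈ Finset.range n, ∫ ω, (D j ω)^2 ∂μ ≤ V) :
    ∀ᵐ ω ∂μ, ∃ l, Tendsto (fun n => ∑ j ∈ Finset.range n, D j ω) atTop (nhds l) := by
  have hint : ∀ n, Integrable (fun ω => ∑ j ∈ Finset.range n, D j ω) μ := fun n =>
    Integrable.of_bound ((md_meas hD n).mono (F.le n)).aestronglyMeasurable _ (ae_of_all _ (md_bdd hDb n))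
  have hmart : Martingale (fun n ω => ∑ j ∈ Finset.range n, D j ω) F μ := by
    apply martingale_of_condExp_sub_eq_zero_nat
    · intro n; exact md_meas hD n
    · exact hint
    · intro n
      have : ((fun ω => ∑ j ∈ Finset.range (n+1), D j ω) - fun ω => ∑ j ∈ Finset.range n, D j ω) = D n := by
        ext ω; simp [Finset.sum_range_succ]
      rw [this]; exact h0 n
  refine hmart.submartingale.exists_ae_tendsto_of_bdd (R := Real.toNNReal (1 + V)) fun n => ?_
  rw [eLpNorm_one_eq_lintegral_enorm, ← ofReal_integral_norm_eq_lintegral_enorm (hint n)]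
  refine ENNReal.ofReal_le_ofReal ?_
  calc ∫ ω, ‖∑ j ∈ Finset.range n, D j ω‖ ∂μ ≤ ∫ ω, (1 + (∑ j ∈ Finset.range n, D j ω)^2) ∂μ := by
        apply integral_mono (hint n).norm ((integrable_const _).add (md_sq_int hD hDb n))
        intro ω
        show |∑ j ∈ Finset.range n, D j ω| ≤ 1 + (∑ j ∈ Finset.range n, D j ω)^2
        nlinarith [sq_abs (∑ j ∈ Finset.range n, D j ω), sq_nonneg (|∑ j ∈ Finset.range n, D j ω| - 1), abs_nonneg (∑ j ∈ Finset.range n, D j ω)]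
    _ ≤ 1 + V := by
        rw [integral_add (integrable_const _) (md_sq_int hD hDb n), md_var hD hDb h0 n]
        simp; exact hV n
end MD
theorem tail_small {f : ℕ → ℝ} (hf : Summable f) {κ : ℝ} (hκ : 0 < κ) :
    ∃ N0, ∀ N ≥ N0, ∀ n, ∑ j ∈ Finset.range n, (if N ≤ j then f j else 0) ≤ κ := by
  obtain ⟨s, hs⟩ := summable_iff_vanishing_norm.1 hf κ hκ
  obtain ⟨N0, hN0⟩ := s.exists_nat_subset_range
  refine ⟨N0, fun N hN n => ?_⟩
  rw [← Finset.sum_filter]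
  refine (le_abs_self _).trans (hs _ ?_).le
  rw [Finset.disjoint_left]
  intro a ha has
  have := hN0 has
  simp at ha this
  omega

theorem det_stay {x ξ M L w s : ℕ → ℝ} {g : ℝ → ℝ} {z r : ℝ} {N : ℕ} (hr : 0 < r)
    (hs : ∀ n, 0 < s n) (hw : ∀ n ≥ N, 0 < w n) (hw1 : 1 ≤ w N)
    (hww : ∀ n ≥ N, w n ≤ w (n+1) * (1 - 1 / (4 * s n)))
    (hrec : ∀ n, x (n+1) = x n + (g (x n) + ξ n) / s n)
    (hg0 : ∀ y ∈ Ioo (z - r) z, 0 ≤ g y) (hg1 : ∀ y ∈ Ioo (z - r) z, g y ≤ (z - y) / 4)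
    (hM0 : M N = 0) (hM : ∀ n ≥ N, M (n+1) = M n + ξ n / s n)
    (hL0 : L N = 0) (hL : ∀ n ≥ N, L (n+1) = L n + w (n+1) / s n * ξ n)
    (hMb : ∀ n, |M n| < 2/5 * r) (hLb : ∀ n, |L n| < 2/5 * r)
    (hx0 : |x N - (z - r/2)| < r / 10) :
    ∀ n ≥ N, x n ∈ Ioo (z - r) z := by
  rw [abs_lt] at hx0
  have hfin : ∀ n ≥ N, (z - x n ≤ z - x N - M n) → (w N * (z - x N) - L n ≤ w n * (z - x n)) →
      x n ∈ Ioo (z - r) z := by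
    intro n hn h1 h2
    have a := abs_lt.1 (hMb n)
    have b := abs_lt.1 (hLb n)
    refine ⟨by linarith, ?_⟩
    by_contra hcon
    push Not at hcon
    have h3 : w n * (z - x n) ≤ 0 := mul_nonpos_of_nonneg_of_nonpos (hw n hn).le (by linarith)
    have h4 : 2/5 * r ≤ w N * (z - x N) := by nlinarith
    linarith
  have main : ∀ n ≥ N, (z - x n ≤ z - x N - M n) ∧ (w N * (z - x N) - L n ≤ w n * (z - x n)) := by
    intro n hn
    induction n, hn using Nat.le_induction with
    | base => simp [hM0, hL0]
    | succ n hn ih =>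
      have hmem := hfin n hn ih.1 ih.2
      have a0 := hg0 _ hmem
      have a1 := hg1 _ hmem
      have hsn := hs n
      have b0 : 0 ≤ g (x n) / s n := div_nonneg a0 hsn.le
      have b1 : g (x n) / s n ≤ (z - x n) * (1 / (4 * s n)) := by
        have : (z - x n) * (1 / (4 * s n)) = ((z - x n) / 4) / s n := by field_simp
        rw [this]; gcongr
      rw [hrec, hM n hn, hL n hn, add_div]
      refine ⟨by linarith [ih.1], ?_⟩
      have c1 := mul_le_mul_of_nonneg_left b1 (hw (n+1) (by omega)).le
      have c2 := mul_le_mul_of_nonneg_right (hww n hn) (show 0 ≤ z - x n by linarith [hmem.2])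
      have c3 : w (n+1) / s n * ξ n = w (n+1) * (ξ n / s n) := by ring
      rw [c3]
      nlinarith [ih.2]
  exact fun n hn => hfin n hn (main n hn).1 (main n hn).2

theorem det_conv {x ξ M s : ℕ → ℝ} {g : ℝ → ℝ} {z r c l : ℝ} {N : ℕ} (hc : 1 < c)
    (hs : ∀ n, s n = n + c)
    (hrec : ∀ n, x (n+1) = x n + (g (x n) + ξ n) / s n) (hgc : Continuous g)
    (hg0 : ∀ y ∈ Ico (z - r) z, 0 < g y) 
    (hM : ∀ n ≥ N, M (n+1) = M n + ξ n / s n) (hMl : Tendsto M atTop (nhds l))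
    (hx : ∀ n ≥ N, x n ∈ Ioo (z - r) z) : Tendsto x atTop (nhds z) := by
  have hsp : ∀ n, 0 < s n := fun n => by rw [hs]; positivity
  have hstep : ∀ n ≥ N, x (n+1) - M (n+1) = x n - M n + g (x n) / s n := by
    intro n hn; rw [hrec, hM n hn]; ring
  have hgx : ∀ n ≥ N, 0 < g (x n) := fun n hn => hg0 _ ⟨(hx n hn).1.le, (hx n hn).2⟩
  obtain ⟨b, hb⟩ := hMl.bddBelow_range
  have hub : ∀ n ≥ N, x n - M n ≤ z - b := by
    intro n hn
    have := hb ⟨n, rfl⟩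
    linarith [(hx n hn).2]
  have hmono : Monotone (fun k => x (k+N) - M (k+N)) := by
    apply monotone_nat_of_le_succ
    intro k
    have := hstep (k+N) (by omega)
    have h2 := div_pos (hgx (k+N) (by omega)) (hsp (k+N))
    rw [show k + 1 + N = k + N + 1 by ring, this]; linarith
  have hlim := tendsto_atTop_ciSup hmono ⟨z - b, by rintro _ ⟨k, rfl⟩; exact hub _ (by omega)⟩
  set q := ⨆ k, (fun k => x (k+N) - M (k+N)) k with hq
  have hlx : Tendsto x atTop (nhds (q + l)) := by
    rw [← tendsto_add_atTop_iff_nat N]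
    have := hlim.add ((tendsto_add_atTop_iff_nat N).2 hMl)
    refine this.congr fun k => by ring
  have hle : q + l ≤ z := le_of_tendsto hlx (eventually_atTop.2 ⟨N, fun n hn => (hx n hn).2.le⟩)
  have hge : z - r ≤ q + l := ge_of_tendsto hlx (eventually_atTop.2 ⟨N, fun n hn => (hx n hn).1.le⟩)
  rcases hle.eq_or_lt with h | h
  · rwa [h] at hlx
  exfalso
  have hgl := hg0 _ ⟨hge, h⟩
  have hev := ((hgc.tendsto _).comp hlx).eventually (lt_mem_nhds (half_lt_self hgl))
  obtain ⟨K, hK⟩ := eventually_atTop.1 hev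
  set N' := max N K with hN'
  have hN1 : N ≤ N' := le_max_left _ _
  have hN2 : K ≤ N' := le_max_right _ _
  have hsum : ∀ n, ∑ k ∈ Finset.range n, g (x (k+N')) / s (k+N') = (x (n+N') - M (n+N')) - (x N' - M N') := by
    intro n
    induction n with
    | zero => simp
    | succ n ih =>
      rw [Finset.sum_range_succ, ih, show n + 1 + N' = n + N' + 1 by ring, hstep _ (by omega)]; ring
  have hS : Summable (fun k => g (x (k+N')) / s (k+N')) := by
    apply summable_of_sum_range_le (c := (z - b) - (x N' - M N'))
    · intro k; exact (div_pos (hgx _ (by omega)) (hsp _)).le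
    · intro n; rw [hsum]; linarith [hub (n+N') (by omega)]
  have hS2 : Summable (fun k : ℕ => 1 / |(k:ℝ) + (N' + c)| ^ (1:ℝ)) := by
    refine Summable.of_nonneg_of_le (fun k => by positivity) (fun k => ?_) (hS.mul_left (2 / g (q+l)))
    rw [Real.rpow_one, abs_of_pos (by positivity)]
    have e : s (k+N') = (k:ℝ) + (N' + c) := by rw [hs]; push_cast; ring
    rw [← e]
    have h1 := hK (k+N') (by omega)
    simp only [Function.comp] at h1
    have h2 := hsp (k+N')
    rw [div_mul_div_comm, div_le_div_iff₀ h2 (by positivity)]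
    nlinarith [mul_le_mul_of_nonneg_right h1.le h2.le]
  have := (Real.summable_one_div_nat_add_rpow _ _).1 hS2
  exact lt_irrefl _ this

section AT
variable {Ω : Type} {mΩ : MeasurableSpace Ω} {μ : Measure Ω} [IsProbabilityMeasure μ]
  {F : Filtration ℕ mΩ}

theorem weighted {ξ : ℕ → Ω → ℝ} {B : ℝ} 
    (hξ : ∀ n, StronglyMeasurable[F (n+1)] (ξ n)) (hξb : ∀ n ω, |ξ n ω| ≤ B)
    (hξ0 : ∀ n, μ[ξ n | F n] =ᵐ[μ] 0) {N : ℕ} {H : Set Ω} (hH : MeasurableSet[F N] H)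
    {cf : ℕ → ℝ} {κ : ℝ} 
    (hκ : ∀ n, ∑ j ∈ Finset.range n, (if N ≤ j then (cf j)^2 else 0) ≤ κ) :
    (∀ b > 0, μ {ω | ∃ n, b ≤ |∑ j ∈ Finset.range n, (if N ≤ j then cf j * H.indicator (ξ j) ω else 0)|}
      ≤ ENNReal.ofReal ((κ * (B^2 * μ.real H)) / b^2)) ∧
    ∀ᵐ ω ∂μ, ∃ l, Tendsto (fun n => ∑ j ∈ Finset.range n, (if N ≤ j then cf j * H.indicator (ξ j) ω else 0)) atTop (nhds l) := by
  have hB : 0 ≤ B := by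
    obtain ⟨ω⟩ : Nonempty Ω := nonempty_of_isProbabilityMeasure μ
    exact (abs_nonneg _).trans (hξb 0 ω)
  set D : ℕ → Ω → ℝ := fun j ω => if N ≤ j then cf j * H.indicator (ξ j) ω else 0 with hDdef
  have hHm := F.le N H hH
  have hind : ∀ j ω, |H.indicator (ξ j) ω| ≤ B := by
    intro j ω
    by_cases h : ω ∈ H
    · simpa [h] using hξb j ω
    · simpa [h] using hB
  have hD : ∀ n, StronglyMeasurable[F (n+1)] (D n) := by
    intro n
    by_cases h : N ≤ n
    · simp only [hDdef, h, if_true]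
      exact (stronglyMeasurable_const).mul ((hξ n).indicator (F.mono (by omega : N ≤ n+1) H hH))
    · simp only [hDdef, h, if_false]
      exact stronglyMeasurable_const
  have hDb : ∀ n ω, |D n ω| ≤ |cf n| * B := by
    intro n ω
    by_cases h : N ≤ n
    · simp only [hDdef, h, if_true, abs_mul]
      exact mul_le_mul_of_nonneg_left (hind n ω) (abs_nonneg _)
    · simp only [hDdef, h, if_false, abs_zero]; positivity
  have hD0 : ∀ n, μ[D n | F n] =ᵐ[μ] 0 := by
    intro n
    by_cases h : N ≤ n
    · have e : D n = cf n • H.indicator (ξ n) := by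
        ext ω; simp [hDdef, h]
      rw [e]
      have hint : Integrable (ξ n) μ := Integrable.of_bound ((hξ n).mono (F.le _)).aestronglyMeasurable B (ae_of_all _ (hξb n))
      filter_upwards [condExp_smul (μ := μ) (cf n) (H.indicator (ξ n)) (F n),
        condExp_indicator (μ := μ) hint (F.mono h H hH), hξ0 n] with ω h1 h2 h3
      rw [h1, Pi.smul_apply, h2]
      by_cases hω : ω ∈ H <;> simp [hω, h3]
    · have e : D n = 0 := by ext ω; simp [hDdef, h]
      rw [e]; simp [condExp_zero]
  have hV : ∀ n, ∑ j ∈ Finset.range n, ∫ ω, (D j ω)^2 ∂μ ≤ κ * (B^2 * μ.real H) := by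
    intro n
    calc ∑ j ∈ Finset.range n, ∫ ω, (D j ω)^2 ∂μ 
        ≤ ∑ j ∈ Finset.range n, (if N ≤ j then (cf j)^2 else 0) * (B^2 * μ.real H) := by
          apply Finset.sum_le_sum
          intro j _
          by_cases h : N ≤ j
          · have : ∀ ω, (D j ω)^2 ≤ H.indicator (fun _ => (cf j)^2 * B^2) ω := by
              intro ω
              by_cases hω : ω ∈ H
              · simp only [hDdef, h, if_true, hω, Set.indicator_of_mem, mul_pow]
                have := pow_le_pow_left₀ (abs_nonneg _) (hξb j ω) 2
                rw [sq_abs] at this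
                exact mul_le_mul_of_nonneg_left this (sq_nonneg _)
              · simp [hDdef, hω]
            have h2 := integral_mono_of_nonneg (μ := μ) (ae_of_all _ fun ω => sq_nonneg (D j ω))
              ((integrable_const ((cf j)^2 * B^2)).indicator hHm) (ae_of_all _ this)
            refine h2.trans (le_of_eq ?_)
            rw [integral_indicator hHm]
            simp [h]; ring
          · simp [hDdef, h]
      _ ≤ κ * (B^2 * μ.real H) := by
          rw [← Finset.sum_mul]
          exact mul_le_mul_of_nonneg_right (hκ n) (by positivity)
  exact ⟨fun b hb => md_maximal hD hDb hD0 hb hV, md_conv hD hDb hD0 hV⟩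

theorem abs_touch {x ξ : ℕ → Ω → ℝ} {c z ε B : ℝ} {g : ℝ → ℝ} (hc : 1 < c) (hε : 0 < ε)
    (hx : ∀ n, Measurable[F n] (x n))
    (hξ : ∀ n, StronglyMeasurable[F (n+1)] (ξ n)) (hξb : ∀ n ω, |ξ n ω| ≤ B)
    (hξ0 : ∀ n, μ[ξ n | F n] =ᵐ[μ] 0)
    (hrec : ∀ n, ∀ᵐ ω ∂μ, x (n+1) ω = x n ω + (g (x n ω) + ξ n ω) / (n + c))
    (hgc : Continuous g) (hg0 : ∀ y ∈ Ioo (z - ε) z, 0 < g y)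
    (hg1 : ∀ y ∈ Ioo (z - ε) z, g y ≤ (z - y) / 4)
    (hreach : ∀ N0, ∀ t ∈ Ioo (z - ε) z, ∀ δ > 0, ∃ N ≥ N0, 0 < μ {ω | |x N ω - t| < δ}) :
    0 < μ {ω | Tendsto (fun n => x n ω) atTop (nhds z)} := by
  set r := ε / 2 with hrdef
  have hr : 0 < r := by positivity
  set s : ℕ → ℝ := fun n => n + c with hsdef
  have hs : ∀ n, 0 < s n := fun n => by simp only [hsdef]; positivity
  set w : ℕ → ℝ := fun n => ((n:ℝ) + c - 1) ^ (1/4 : ℝ) with hwdef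
  have hbase : ∀ n : ℕ, 0 < (n:ℝ) + c - 1 := fun n => by
    have : (0:ℝ) ≤ n := by positivity
    linarith
  have hw : ∀ n, 0 < w n := fun n => Real.rpow_pos_of_pos (hbase n) _
  have hwsucc : ∀ n, w (n+1) = (s n) ^ (1/4:ℝ) := by
    intro n; simp only [hwdef, hsdef]; congr 1; push_cast; ring
  have hww : ∀ n, w n ≤ w (n+1) * (1 - 1 / (4 * s n)) := by
    intro n
    have h1 := rpow_one_add_le_one_add_mul_self (s := -(1 / s n)) (p := 1/4) (by
      have : 1 / s n ≤ 1 := by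
        rw [div_le_one (hs n)]; simp only [hsdef]
        have : (0:ℝ) ≤ n := by positivity
        linarith
      linarith) (by norm_num) (by norm_num)
    have h2 : w n = w (n+1) * (1 + -(1 / s n)) ^ (1/4:ℝ) := by
      rw [hwsucc, ← Real.mul_rpow (hs n).le]
      · simp only [hwdef]; congr 1
        have := (hs n).ne'
        field_simp
        simp only [hsdef]; ring
      · have : (1 + -(1 / s n)) = ((n:ℝ) + c - 1) / s n := by
          have := (hs n).ne'
          field_simp
          simp only [hsdef]; ring
        rw [this]; exact (div_pos (hbase n) (hs n)).le
    rw [h2]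
    refine mul_le_mul_of_nonneg_left (h1.trans (le_of_eq ?_)) (hw _).le
    have := (hs n).ne'
    field_simp
    try ring
  have hsumM : Summable (fun j => (1 / s j)^2) := by
    have := (Real.summable_one_div_nat_add_rpow c 2).2 (by norm_num)
    refine this.congr fun j => ?_
    have h := hs j
    simp only [hsdef] at h ⊢
    rw [abs_of_pos h, div_pow, one_pow]; norm_cast
  have hsumL : Summable (fun j => (w (j+1) / s j)^2) := by
    have := (Real.summable_one_div_nat_add_rpow c (3/2)).2 (by norm_num)
    refine this.congr fun j => ?_
    have h := hs j
    rw [hwsucc]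
    have e : s j = j + c := rfl
    rw [← e, abs_of_pos h, div_pow, ← Real.rpow_natCast, ← Real.rpow_mul h.le, ← Real.rpow_natCast (s j) 2, ← Real.rpow_sub h,
      one_div, ← Real.rpow_neg h.le]
    norm_num
  set b := 2/5 * r with hb
  have hbp : 0 < b := by positivity
  set κ := b^2 / (4 * (B^2+1)) with hκd
  have hκ : 0 < κ := by positivity
  obtain ⟨N1, hN1⟩ := tail_small hsumM hκ
  obtain ⟨N2, hN2⟩ := tail_small hsumL hκ
  obtain ⟨N, hN, hpos⟩ := hreach (max 1 (max N1 N2)) (z - r/2) ⟨by linarith, by linarith⟩ (r/10) (by positivity)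
  have hNa : 1 ≤ N := (le_max_left _ _).trans hN
  have hNb : N1 ≤ N := ((le_max_left _ _).trans (le_max_right _ _)).trans hN
  have hNc : N2 ≤ N := ((le_max_right _ _).trans (le_max_right _ _)).trans hN
  set H := {ω | |x N ω - (z - r/2)| < r/10} with hHd
  have hH : MeasurableSet[F N] H := by
    have h1 : Measurable (fun y : ℝ => |y - (z - r/2)|) := by fun_prop
    have h2 : MeasurableSet {y : ℝ | |y - (z - r/2)| < r/10} := measurableSet_lt h1 measurable_const
    exact hx N h2
  obtain ⟨hM1, hM2⟩ := weighted hξ hξb hξ0 hH (hN1 N hNb)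
  obtain ⟨hL1, -⟩ := weighted hξ hξb hξ0 hH (hN2 N hNc)
  have hM1 := hM1 b hbp
  have hL1 := hL1 b hbp
  by_contra hcon
  have hT : μ {ω | Tendsto (fun n => x n ω) atTop (nhds z)} = 0 := by simpa using hcon
  have hTae : ∀ᵐ ω ∂μ, ¬ Tendsto (fun n => x n ω) atTop (nhds z) := by
    rw [ae_iff]; simpa using hT
  have hrec' := ae_all_iff.2 hrec
  have hsub : ∀ᵐ ω ∂μ, ω ∈ H → ω ∈ 
      {ω | ∃ n, b ≤ |∑ j ∈ Finset.range n, (if N ≤ j then (1 / s j) * H.indicator (ξ j) ω else 0)|} ∪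
      {ω | ∃ n, b ≤ |∑ j ∈ Finset.range n, (if N ≤ j then (w (j+1) / s j) * H.indicator (ξ j) ω else 0)|} := by
    filter_upwards [hTae, hrec', hM2] with ω h1 h2 h3 hω
    by_contra h4
    simp only [Set.mem_union, Set.mem_ofPred_eq, not_or, not_exists, not_le] at h4
    apply h1
    obtain ⟨l, hl⟩ := h3
    have hw1 : 1 ≤ w N := by
      apply Real.one_le_rpow _ (by norm_num)
      have : (1:ℝ) ≤ N := by exact_mod_cast hNa
      linarith
    have hzero : ∀ cf : ℕ → ℝ, ∑ j ∈ Finset.range N, (if N ≤ j then cf j * H.indicator (ξ j) ω else 0) = 0 := by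
      intro cf
      apply Finset.sum_eq_zero
      intro j hj
      rw [if_neg]; simp at hj; omega
    have hstay := det_stay (x := fun n => x n ω) (ξ := fun n => ξ n ω) (w := w) (s := s) (g := g) (z := z) (r := r) (N := N)
      hr hs (fun n _ => hw n) hw1 (fun n _ => hww n) h2 (fun y hy => (hg0 y ⟨by linarith [hy.1], hy.2⟩).le)
      (fun y hy => hg1 y ⟨by linarith [hy.1], hy.2⟩) (hzero _)
      (fun n hn => by rw [Finset.sum_range_succ, if_pos hn, Set.indicator_of_mem hω]; ring) (hzero _)
      (fun n hn => by rw [Finset.sum_range_succ, if_pos hn, Set.indicator_of_mem hω])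
      h4.1 h4.2 hω
    exact det_conv (x := fun n => x n ω) (ξ := fun n => ξ n ω) (s := s) (g := g) (z := z) (r := r) (N := N) hc
      (fun n => rfl) h2 hgc (fun y hy => hg0 y ⟨by linarith [hy.1], hy.2⟩) 
      (fun n hn => by rw [Finset.sum_range_succ, if_pos hn, Set.indicator_of_mem hω]; ring) hl hstay
  have hle := (measure_mono_ae (s := H) hsub).trans ((measure_union_le _ _).trans (add_le_add hM1 hL1))
  have hposr : 0 < μ.real H := ENNReal.toReal_pos hpos.ne' (measure_ne_top _ _)
  have hnn : 0 ≤ (κ * (B^2 * μ.real H)) / b^2 := by positivity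
  rw [← ENNReal.ofReal_add hnn hnn, ← ofReal_measureReal, ENNReal.ofReal_le_ofReal_iff (by positivity)] at hle
  have : (κ * (B^2 * μ.real H)) / b^2 ≤ μ.real H / 4 := by
    rw [hκd]
    have e : (b^2 / (4 * (B^2+1)) * (B^2 * μ.real H)) / b^2 = (B^2 / (B^2+1)) * (μ.real H / 4) := by
      field_simp
    rw [e]
    have : B^2 / (B^2+1) ≤ 1 := by rw [div_le_one (by positivity)]; linarith
    nlinarith
  linarith
end AT
namespace PAProcess
section PA
variable {Ω : Type} [MeasurableSpace Ω] (P : PAProcess Ω)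

def W (k : ℕ) (y : ℝ) : ℝ := (P.m.choose k : ℝ) * y ^ k * (1 - y) ^ (P.m - k)
def Phi (f h : ℕ → ℝ) (n : ℕ) (ω : Ω) : ℝ := ∑ k ∈ Finset.range (P.m + 1),
  (f k * (P.Rd n k).indicator (fun _ => (1:ℝ)) ω + h k * (P.Bl n k).indicator (fun _ => (1:ℝ)) ω)
def Psi (f h : ℕ → ℝ) (y : ℝ) : ℝ := ∑ k ∈ Finset.range (P.m + 1),
  P.W k y * (f k * P.p k + h k * (1 - P.p k))

theorem Rd_meas (n k : ℕ) : MeasurableSet[P.F (n+1)] (P.Rd n k) := by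
  have h1 := P.adaptedA (n+1)
  have h2 := P.adaptedX (n+1)
  have h3 := (P.adaptedA n).mono (P.F.mono (Nat.le_succ n)) le_rfl
  have h4 := (P.adaptedX n).mono (P.F.mono (Nat.le_succ n)) le_rfl
  exact (measurableSet_eq_fun h1 (h3.add_const 1)).inter
    (measurableSet_eq_fun h2 ((h4.add_const k).add_const P.m))

theorem Bl_meas (n k : ℕ) : MeasurableSet[P.F (n+1)] (P.Bl n k) := by
  have h1 := P.adaptedA (n+1)
  have h2 := P.adaptedX (n+1)
  have h3 := (P.adaptedA n).mono (P.F.mono (Nat.le_succ n)) le_rfl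
  have h4 := (P.adaptedX n).mono (P.F.mono (Nat.le_succ n)) le_rfl
  exact (measurableSet_eq_fun h1 h3).inter (measurableSet_eq_fun h2 (h4.add_const k))

theorem x_eq (n : ℕ) (ω : Ω) : P.x n ω = (P.X n ω : ℝ) / ((P.X0 : ℝ) + P.Y0 + 2 * P.m * n) := by
  simp [x, S]

theorem x_meas (n : ℕ) : Measurable[P.F n] (P.x n) := by
  have h : Measurable (fun v : ℕ => (v:ℝ) / (P.S n : ℝ)) := measurable_of_countable _
  exact h.comp (P.adaptedX n)

theorem x_mem (n : ℕ) (ω : Ω) : P.x n ω ∈ Icc (0:ℝ) 1 := by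
  refine ⟨by unfold x; positivity, ?_⟩
  apply div_le_one_of_le₀ _ (by positivity)
  exact_mod_cast P.hXle n ω

theorem W_cont (k : ℕ) : Continuous (P.W k) := by unfold W; fun_prop

theorem Psi_cont (f h : ℕ → ℝ) : Continuous (P.Psi f h) := by
  unfold Psi
  exact continuous_finsetSum _ fun k _ => (P.W_cont k).mul continuous_const

theorem W_sum (y : ℝ) : ∑ k ∈ Finset.range (P.m + 1), P.W k y = 1 := by
  have := add_pow y (1 - y) P.m
  simp only [add_sub_cancel, one_pow] at this
  rw [this]
  refine Finset.sum_congr rfl fun k _ => by unfold W; ring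

theorem W_mean (y : ℝ) : ∑ k ∈ Finset.range (P.m + 1), P.W k y * k = P.m * y := by
  have := congrArg (Polynomial.eval y) (bernsteinPolynomial.sum_smul ℝ P.m)
  simp only [Polynomial.eval_finsetSum, bernsteinPolynomial] at this
  simp at this
  rw [← this]
  refine Finset.sum_congr rfl fun k _ => by unfold W; ring

theorem W_pos {k : ℕ} (hk : k ≤ P.m) {y : ℝ} (hy : y ∈ Ioo (0:ℝ) 1) : 0 < P.W k y := by
  unfold W
  have h1 : 0 < 1 - y := by linarith [hy.2]
  have h2 := hy.1
  have h3 : 0 < P.m.choose k := Nat.choose_pos hk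
  positivity

theorem hm0 : (0:ℝ) < P.m := by exact_mod_cast P.hm

theorem Psi_X (y : ℝ) : P.Psi (fun k => (k + P.m) / (2 * P.m)) (fun k => k / (2 * P.m)) y = y + P.poly y := by
  have h := P.hm0
  have h1 := P.W_mean y
  have e : P.poly y = ∑ k ∈ Finset.range (P.m + 1), (1/2) * (P.W k y * (P.p k - (k:ℝ)/P.m)) := by
    unfold poly polyP; rw [Finset.mul_sum]; rfl
  have e2 : y = ∑ k ∈ Finset.range (P.m + 1), P.W k y * k / P.m := by
    rw [← Finset.sum_div, h1]; field_simp
  rw [e]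
  conv_rhs => lhs; rw [e2]
  rw [← Finset.sum_add_distrib]
  unfold Psi
  refine Finset.sum_congr rfl fun k _ => ?_
  field_simp; ring

theorem Psi_A (y : ℝ) : P.Psi (fun _ => 1) (fun _ => 0) y = y + 2 * P.poly y := by
  have h := P.hm0
  have h1 := P.W_mean y
  have e : P.poly y = ∑ k ∈ Finset.range (P.m + 1), (1/2) * (P.W k y * (P.p k - (k:ℝ)/P.m)) := by
    unfold poly polyP; rw [Finset.mul_sum]; rfl
  have e2 : y = ∑ k ∈ Finset.range (P.m + 1), P.W k y * k / P.m := by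
    rw [← Finset.sum_div, h1]; field_simp
  rw [e]
  conv_rhs => lhs; rw [e2]
  rw [Finset.mul_sum, ← Finset.sum_add_distrib]
  unfold Psi
  refine Finset.sum_congr rfl fun k _ => ?_
  field_simp; ring

theorem Phi_meas (f h : ℕ → ℝ) (n : ℕ) : StronglyMeasurable[P.F (n+1)] (P.Phi f h n) := by
  unfold Phi
  apply Finset.stronglyMeasurable_fun_sum
  intro k _
  have a : StronglyMeasurable[P.F (n+1)] ((P.Rd n k).indicator (fun _ => (1:ℝ))) :=
    stronglyMeasurable_const.indicator (P.Rd_meas n k)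
  have b : StronglyMeasurable[P.F (n+1)] ((P.Bl n k).indicator (fun _ => (1:ℝ))) :=
    stronglyMeasurable_const.indicator (P.Bl_meas n k)
  exact (stronglyMeasurable_const.mul a).add (stronglyMeasurable_const.mul b)

theorem Phi_bdd (f h : ℕ → ℝ) (n : ℕ) (ω : Ω) :
    |P.Phi f h n ω| ≤ ∑ k ∈ Finset.range (P.m + 1), (|f k| + |h k|) := by
  unfold Phi
  refine (Finset.abs_sum_le_sum_abs _ _).trans (Finset.sum_le_sum fun k _ => ?_)
  refine (abs_add_le _ _).trans (add_le_add ?_ ?_) 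
  · by_cases hω : ω ∈ P.Rd n k <;> simp [hω]
  · by_cases hω : ω ∈ P.Bl n k <;> simp [hω]

theorem ind_int (s : Set Ω) (n : ℕ) (hs : MeasurableSet[P.F n] s) :
    Integrable (s.indicator (fun _ => (1:ℝ))) P.μ := by
  have := P.isProb
  exact (integrable_const _).indicator (P.F.le n s hs)

theorem Phi_cond (f h : ℕ → ℝ) (n : ℕ) :
    P.μ[P.Phi f h n | P.F n] =ᵐ[P.μ] fun ω => P.Psi f h (P.x n ω) := by
  have := P.isProb
  have e : P.Phi f h n = ∑ k ∈ Finset.range (P.m + 1),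
      (f k • (P.Rd n k).indicator (fun _ => (1:ℝ)) + h k • (P.Bl n k).indicator (fun _ => (1:ℝ))) := by
    ext ω; simp [Phi, Finset.sum_apply]
  have hR := fun k => P.ind_int _ _ (P.Rd_meas n k)
  have hB := fun k => P.ind_int _ _ (P.Bl_meas n k)
  rw [e]
  have h1 := condExp_finsetSum (μ := P.μ) (s := Finset.range (P.m+1)) 
    (f := fun k => f k • (P.Rd n k).indicator (fun _ => (1:ℝ)) + h k • (P.Bl n k).indicator (fun _ => (1:ℝ)))
    (fun k _ => ((hR k).smul (f k)).add ((hB k).smul (h k))) (P.F n)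
  have h2 : ∀ᵐ ω ∂P.μ, ∀ k ∈ Finset.range (P.m+1), 
      (P.μ[f k • (P.Rd n k).indicator (fun _ => (1:ℝ)) + h k • (P.Bl n k).indicator (fun _ => (1:ℝ)) | P.F n]) ω
        = P.W k (P.x n ω) * (f k * P.p k + h k * (1 - P.p k)) := by
    rw [Finset.eventually_all]
    intro k hk
    have hk' : k ≤ P.m := by simp at hk; omega
    filter_upwards [condExp_add (μ := P.μ) ((hR k).smul (f k)) ((hB k).smul (h k)) (P.F n),
      condExp_smul (μ := P.μ) (f k) ((P.Rd n k).indicator (fun _ => (1:ℝ))) (P.F n),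
      condExp_smul (μ := P.μ) (h k) ((P.Bl n k).indicator (fun _ => (1:ℝ))) (P.F n),
      P.step_red n k hk', P.step_blue n k hk'] with ω a1 a2 a3 a4 a5
    rw [a1, Pi.add_apply, a2, a3, Pi.smul_apply, Pi.smul_apply]
    unfold Rd Bl
    rw [a4, a5, P.x_eq, W]; simp only [smul_eq_mul]; ring
  filter_upwards [h1, h2] with ω a b
  rw [a, Finset.sum_apply, Psi]
  exact Finset.sum_congr rfl b

theorem Phi_Rd (f h : ℕ → ℝ) (n k : ℕ) (hk : k ≤ P.m) (ω : Ω) (hω : ω ∈ P.Rd n k) : P.Phi f h n ω = f k := by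
  unfold Phi
  rw [Finset.sum_eq_single k]
  · have : ω ∉ P.Bl n k := by
      intro h'; have := hω.1; have := h'.1; omega
    simp [hω, this]
  · intro j _ hj
    have h1 : ω ∉ P.Bl n j := by
      intro h'; have := hω.1; have := h'.1; omega
    have h2 : ω ∉ P.Rd n j := by
      intro h'; have := hω.2; have := h'.2; omega
    simp [h1, h2]
  · intro h; simp at h; omega

theorem Phi_Bl (f h : ℕ → ℝ) (n k : ℕ) (hk : k ≤ P.m) (ω : Ω) (hω : ω ∈ P.Bl n k) : P.Phi f h n ω = h k := by
  unfold Phi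
  rw [Finset.sum_eq_single k]
  · have : ω ∉ P.Rd n k := by
      intro h'; have := hω.1; have := h'.1; omega
    simp [hω, this]
  · intro j _ hj
    have h1 : ω ∉ P.Rd n j := by
      intro h'; have := hω.1; have := h'.1; omega
    have h2 : ω ∉ P.Bl n j := by
      intro h'; have := hω.2; have := h'.2; omega
    simp [h1, h2]
  · intro h; simp at h; omega

theorem step_cover (n : ℕ) : ∀ᵐ ω ∂P.μ, ∃ k ≤ P.m, ω ∈ P.Rd n k ∨ ω ∈ P.Bl n k := by
  have := P.isProb
  set f := P.Phi (fun _ => 1) (fun _ => 1) n with hf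
  have hle : ∀ ω, f ω ≤ 1 := by
    intro ω
    by_cases h : ∃ k ≤ P.m, ω ∈ P.Rd n k ∨ ω ∈ P.Bl n k
    · obtain ⟨k, hk, h | h⟩ := h
      · exact (P.Phi_Rd _ _ n k hk ω h).le
      · exact (P.Phi_Bl _ _ n k hk ω h).le
    · push Not at h
      rw [hf, Phi, Finset.sum_eq_zero]
      · norm_num
      · intro k hk
        obtain ⟨h1, h2⟩ := h k (by simp at hk; omega)
        simp [h1, h2]
  have hfi : Integrable f P.μ := Integrable.of_bound ((P.Phi_meas _ _ n).mono (P.F.le _)).aestronglyMeasurable _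
    (ae_of_all _ (P.Phi_bdd _ _ n))
  have hint : ∫ ω, f ω ∂P.μ = 1 := by
    rw [← integral_condExp (P.F.le n), integral_congr_ae (P.Phi_cond _ _ n)]
    have : ∀ y, P.Psi (fun _ => 1) (fun _ => 1) y = 1 := by
      intro y; exact Eq.trans (Finset.sum_congr rfl fun k _ => by ring) (P.W_sum y)
    simp [this]
  have h0 : ∫ ω, (1 - f ω) ∂P.μ = 0 := by
    rw [integral_sub (integrable_const _) hfi, hint]; simp
  rw [integral_eq_zero_iff_of_nonneg (fun ω => sub_nonneg.2 (hle ω)) ((integrable_const _).sub hfi)] at h0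
  filter_upwards [h0] with ω hω
  by_contra h
  push Not at h
  have : f ω = 0 := by
    rw [hf, Phi, Finset.sum_eq_zero]
    intro k hk
    obtain ⟨h1, h2⟩ := h k (by simp at hk; omega)
    simp [h1, h2]
  simp [this] at hω

def xi (f h : ℕ → ℝ) (n : ℕ) (ω : Ω) : ℝ := P.Phi f h n ω - P.Psi f h (P.x n ω)

theorem xi_psi_meas (f h : ℕ → ℝ) (n : ℕ) : StronglyMeasurable[P.F n] (fun ω => P.Psi f h (P.x n ω)) :=
  ((P.Psi_cont f h).measurable.comp (P.x_meas n)).stronglyMeasurable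

theorem xi_meas (f h : ℕ → ℝ) (n : ℕ) : StronglyMeasurable[P.F (n+1)] (P.xi f h n) :=
  (P.Phi_meas f h n).sub ((P.xi_psi_meas f h n).mono (P.F.mono (Nat.le_succ n)))

theorem xi_bdd (f h : ℕ → ℝ) : ∃ B, ∀ n ω, |P.xi f h n ω| ≤ B := by
  obtain ⟨C, hC⟩ := isCompact_Icc.exists_bound_of_continuousOn (P.Psi_cont f h).continuousOn (s := Icc (0:ℝ) 1)
  refine ⟨(∑ k ∈ Finset.range (P.m + 1), (|f k| + |h k|)) + C, fun n ω => ?_⟩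
  exact (abs_sub _ _).trans (add_le_add (P.Phi_bdd f h n ω) (hC _ (P.x_mem n ω)))

theorem xi_cond (f h : ℕ → ℝ) (n : ℕ) : P.μ[P.xi f h n | P.F n] =ᵐ[P.μ] 0 := by
  have := P.isProb
  have h1 : Integrable (P.Phi f h n) P.μ := Integrable.of_bound ((P.Phi_meas _ _ n).mono (P.F.le _)).aestronglyMeasurable _
    (ae_of_all _ (P.Phi_bdd _ _ n))
  obtain ⟨C, hC⟩ := isCompact_Icc.exists_bound_of_continuousOn (P.Psi_cont f h).continuousOn (s := Icc (0:ℝ) 1)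
  have h2 : Integrable (fun ω => P.Psi f h (P.x n ω)) P.μ := 
    Integrable.of_bound ((P.xi_psi_meas f h n).mono (P.F.le n)).aestronglyMeasurable C 
      (ae_of_all _ fun ω => hC _ (P.x_mem n ω))
  have h3 := condExp_of_stronglyMeasurable (μ := P.μ) (P.F.le n) (P.xi_psi_meas f h n) h2
  have e : P.xi f h n = P.Phi f h n - fun ω => P.Psi f h (P.x n ω) := rfl
  rw [e]
  filter_upwards [condExp_sub h1 h2 (P.F n), P.Phi_cond f h n] with ω a b
  rw [a, Pi.sub_apply, h3, b]; simp

theorem x_rec (hX0 : 0 < P.X0) (n : ℕ) : ∀ᵐ ω ∂P.μ, P.x (n+1) ω = P.x n ω + 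
    (P.poly (P.x n ω) + P.xi (fun k => (k + P.m) / (2 * P.m)) (fun k => k / (2 * P.m)) n ω) /
      (n + (((P.X0 : ℝ) + P.Y0) / (2 * P.m) + 1)) := by
  filter_upwards [P.step_cover n] with ω hω
  set f : ℕ → ℝ := fun k => (k + P.m) / (2 * P.m) with hf
  set h : ℕ → ℝ := fun k => k / (2 * P.m) with hh
  have hm := P.hm0
  have key : (P.X (n+1) ω : ℝ) = P.X n ω + 2 * P.m * P.Phi f h n ω := by
    obtain ⟨k, hk, hω | hω⟩ := hω
    · rw [P.Phi_Rd f h n k hk ω hω, hω.2, hf]; push_cast; field_simp; ring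
    · rw [P.Phi_Bl f h n k hk ω hω, hω.2, hh]; push_cast; field_simp
  have e : P.xi f h n ω = P.Phi f h n ω - (P.x n ω + P.poly (P.x n ω)) := by
    rw [xi, P.Psi_X]
  have hS0 : (0:ℝ) < P.X0 := by exact_mod_cast hX0
  have hS : (0:ℝ) < (P.X0:ℝ) + P.Y0 + 2 * P.m * n := by positivity
  rw [e]
  have hx : (P.X n ω : ℝ) = P.x n ω * ((P.X0:ℝ) + P.Y0 + 2 * P.m * n) := by
    rw [x_eq]; field_simp
  rw [P.x_eq (n+1), key, hx]
  have hd : (0:ℝ) < (P.X0:ℝ) + P.Y0 + 2 * P.m * ((n+1 : ℕ):ℝ) := by positivity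
  have hd2 : (0:ℝ) < (n + (((P.X0 : ℝ) + P.Y0) / (2 * P.m) + 1)) := by positivity
  have hdd : (P.X0:ℝ) + P.Y0 + 2 * P.m * ((n+1 : ℕ):ℝ) = 2 * P.m * (n + (((P.X0 : ℝ) + P.Y0) / (2 * P.m) + 1)) := by
    push_cast; field_simp
    try ring
  have hdd2 : (P.X0:ℝ) + P.Y0 + 2 * P.m * n = 2 * P.m * ((n + (((P.X0 : ℝ) + P.Y0) / (2 * P.m) + 1)) - 1) := by
    field_simp; ring
  rw [hdd, hdd2]
  generalize (n + (((P.X0 : ℝ) + P.Y0) / (2 * P.m) + 1)) = q at *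
  field_simp; ring

theorem A_rec (n : ℕ) : ∀ᵐ ω ∂P.μ, (P.A (n+1) ω : ℝ) = P.A n ω + 
    (P.xi (fun _ => 1) (fun _ => 0) n ω + (P.x n ω + 2 * P.poly (P.x n ω))) := by
  filter_upwards [P.step_cover n] with ω hω
  rw [xi, P.Psi_A]
  obtain ⟨k, hk, hω | hω⟩ := hω
  · rw [P.Phi_Rd _ _ n k hk ω hω, hω.1]; push_cast; ring
  · rw [P.Phi_Bl _ _ n k hk ω hω, hω.1]; ring

end PA
end PAProcess
namespace PAProcess
section PA2
variable {Ω : Type} [MeasurableSpace Ω] (P : PAProcess Ω)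

def Av (e : ℕ) : Prop := ∃ k ≤ P.m, (0 < P.p k ∧ e = k + P.m) ∨ (P.p k < 1 ∧ e = k)

def Rch (n v : ℕ) : Prop := 0 < v ∧ v < P.S n ∧ 0 < P.μ {ω | P.X n ω = v}

theorem Av_le {e : ℕ} (h : P.Av e) : e ≤ 2 * P.m := by
  obtain ⟨k, hk, h | h⟩ := h <;> omega

theorem pos_aux {n v k : ℕ} (h : P.Rch n v) (hk : k ≤ P.m) {E : Set Ω} (hE : MeasurableSet[P.F (n+1)] E) {q : ℝ} (hq : 0 < q)
    (hc : P.μ[E.indicator (fun _ => (1:ℝ)) | P.F n] =ᵐ[P.μ] fun ω => (P.m.choose k : ℝ) *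
        ((P.X n ω : ℝ) / ((P.X0 : ℝ) + P.Y0 + 2 * P.m * n)) ^ k *
        (1 - (P.X n ω : ℝ) / ((P.X0 : ℝ) + P.Y0 + 2 * P.m * n)) ^ (P.m - k) * q) :
    0 < P.μ ({ω | P.X n ω = v} ∩ E) := by
  have := P.isProb
  obtain ⟨hv0, hv1, hpos⟩ := h
  have hs : MeasurableSet[P.F n] {ω | P.X n ω = v} := (P.adaptedX n) (measurableSet_singleton v)
  have hs' := P.F.le n _ hs
  have hE' := P.F.le _ _ hE
  have h1 : ∫ ω in {ω | P.X n ω = v}, E.indicator (fun _ => (1:ℝ)) ω ∂P.μ = P.μ.real ({ω | P.X n ω = v} ∩ E) := by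
    rw [integral_indicator hE', setIntegral_const, smul_eq_mul, mul_one, measureReal_restrict_apply hE', Set.inter_comm]
  have h2 := setIntegral_condExp (P.F.le n) (P.ind_int E (n+1) hE) hs
  have hS : ((P.S n : ℕ) : ℝ) = (P.X0 : ℝ) + P.Y0 + 2 * P.m * n := by simp [S]
  have hyv : (v:ℝ) / P.S n ∈ Ioo (0:ℝ) 1 := by
    have a : (0:ℝ) < v := by exact_mod_cast hv0
    have b : (v:ℝ) < P.S n := by exact_mod_cast hv1
    exact ⟨div_pos a (a.trans b), (div_lt_one (a.trans b)).2 b⟩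
  have h3 : ∫ ω in {ω | P.X n ω = v}, (P.μ[E.indicator (fun _ => (1:ℝ)) | P.F n]) ω ∂P.μ =
      ∫ ω in {ω | P.X n ω = v}, P.W k ((v:ℝ) / P.S n) * q ∂P.μ := by
    apply setIntegral_congr_ae hs'
    filter_upwards [hc] with ω hω hv
    have hv : P.X n ω = v := hv
    rw [hω, hv, W, hS]
  rw [h1, h3, setIntegral_const, smul_eq_mul] at h2
  have h4 : 0 < P.μ.real ({ω | P.X n ω = v} ∩ E) := by
    rw [← h2]
    exact mul_pos (ENNReal.toReal_pos hpos.ne' (measure_ne_top _ _)) (mul_pos (P.W_pos hk hyv) hq)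
  exact (ENNReal.toReal_pos_iff.1 h4).1

theorem Rch_step {n v e : ℕ} (h : P.Rch n v) (he : P.Av e) : P.Rch (n+1) (v+e) := by
  have hle := P.Av_le he
  have h1 := h.1
  have h2 := h.2.1
  refine ⟨by omega, ?_, ?_⟩
  · have : P.S (n+1) = P.S n + 2 * P.m := by simp [S]; ring
    omega
  · obtain ⟨k, hk, ⟨hp, rfl⟩ | ⟨hp, rfl⟩⟩ := he
    · refine (P.pos_aux h hk (P.Rd_meas n k) hp (P.step_red n k hk)).trans_le (measure_mono ?_)
      rintro ω ⟨a, b⟩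
      have a : P.X n ω = v := a
      have b := b.2
      show P.X (n+1) ω = v + (k + P.m)
      omega
    · refine (P.pos_aux h hk (P.Bl_meas n e) (by linarith : 0 < 1 - P.p e) (P.step_blue n e hk)).trans_le (measure_mono ?_)
      rintro ω ⟨a, b⟩
      have a : P.X n ω = v := a
      have b := b.2
      show P.X (n+1) ω = v + e
      omega

theorem reach (hX0 : 0 < P.X0) (hY0 : 0 < P.Y0) {lo hi : ℕ} (hlo : P.Av lo) (hhi : P.Av hi) {t : ℝ}
    (h1 : (lo:ℝ) ≤ 2 * P.m * t) (h2 : 2 * P.m * t ≤ hi) (N0 : ℕ) {δ : ℝ} (hδ : 0 < δ) :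
    ∃ N ≥ N0, 0 < P.μ {ω | |P.x N ω - t| < δ} := by
  have := P.isProb
  set K : ℝ := max (|P.X0 - t * P.S 0|) (2 * P.m) with hK
  have hKm : 2 * (P.m:ℝ) ≤ K := le_max_right _ _
  have hSs : ∀ n, (P.S (n+1) : ℝ) = P.S n + 2 * P.m := by intro n; simp [S]; ring
  have hlo' : (0:ℝ) ≤ lo := by positivity
  have hhi' : (hi:ℝ) ≤ 2 * P.m := by exact_mod_cast P.Av_le hhi
  have main : ∀ n, ∃ v, P.Rch n v ∧ |(v:ℝ) - t * P.S n| ≤ K := by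
    intro n
    induction n with
    | zero =>
      refine ⟨P.X0, ⟨hX0, by simp [S]; omega, ?_⟩, le_max_left _ _⟩
      simp [P.hX0]
    | succ n ih =>
      obtain ⟨v, hv, hb⟩ := ih
      rw [abs_le] at hb
      by_cases hlt : (v:ℝ) < t * P.S n
      · refine ⟨v + hi, P.Rch_step hv hhi, ?_⟩
        rw [hSs, abs_le]; push_cast
        constructor <;> nlinarith
      · refine ⟨v + lo, P.Rch_step hv hlo, ?_⟩
        push Not at hlt
        rw [hSs, abs_le]; push_cast
        constructor <;> nlinarith
  have hm := P.hm0
  obtain ⟨N1, hN1⟩ := exists_nat_gt (K / δ)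
  refine ⟨max N0 (N1 + 1), le_max_left _ _, ?_⟩
  set N := max N0 (N1+1) with hN
  obtain ⟨v, hv, hb⟩ := main N
  refine hv.2.2.trans_le (measure_mono ?_)
  intro ω hω
  have hω : P.X N ω = v := hω
  show |P.x N ω - t| < δ
  have hSN : (N:ℝ) ≤ P.S N := by
    have : N ≤ P.S N := by
      simp only [S]
      nlinarith [P.hm]
    exact_mod_cast this
  have hNN : (N1:ℝ) + 1 ≤ N := by exact_mod_cast le_max_right N0 (N1+1)
  have hSp : (0:ℝ) < P.S N := by
    have : (0:ℝ) ≤ N1 := by positivity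
    linarith
  have e : P.x N ω - t = ((v:ℝ) - t * P.S N) / P.S N := by
    rw [x, hω]; field_simp
  rw [e, abs_div, abs_of_pos hSp, div_lt_iff₀ hSp]
  rw [div_lt_iff₀ hδ] at hN1
  nlinarith

theorem no_onesided {z ε : ℝ} (hz : z ∈ P.Zp ∩ Set.Ioo (0 : ℝ) 1) (hε : 0 < ε)
    (htouch : (∀ y ∈ Set.Ioo (z - ε) z ∪ Set.Ioo z (z + ε), 0 < P.poly y) ∨
              (∀ y ∈ Set.Ioo (z - ε) z ∪ Set.Ioo z (z + ε), P.poly y < 0))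
    (h : ∀ k ≤ P.m, (P.p k * P.m + k) / (2 * P.m) - z = 0) : False := by
  have hm := P.hm0
  have hall : ∀ y, P.poly y = z - y := by
    intro y
    have h1 := P.Psi_X y
    have h2 : P.Psi (fun k => (k + P.m) / (2 * P.m)) (fun k => k / (2 * P.m)) y = z := by
      have e : P.Psi (fun k => (k + P.m) / (2 * P.m)) (fun k => k / (2 * P.m)) y
          = ∑ k ∈ Finset.range (P.m + 1), P.W k y * z := by
        refine Finset.sum_congr rfl fun k hk => ?_
        have := h k (by simp at hk; omega)
        congr 1
        rw [← sub_eq_zero, ← this]; field_simp; ring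
      rw [e, ← Finset.sum_mul, P.W_sum, one_mul]
    linarith
  have m1 : z - ε/2 ∈ Set.Ioo (z - ε) z ∪ Set.Ioo z (z + ε) := Or.inl ⟨by linarith, by linarith⟩
  have m2 : z + ε/2 ∈ Set.Ioo (z - ε) z ∪ Set.Ioo z (z + ε) := Or.inr ⟨by linarith, by linarith⟩
  rcases htouch with h' | h'
  · have := h' _ m2; rw [hall] at this; linarith
  · have := h' _ m1; rw [hall] at this; linarith

theorem sum_zero {z : ℝ} (hz : z ∈ P.Zp ∩ Set.Ioo (0 : ℝ) 1) :
    ∑ k ∈ Finset.range (P.m+1), P.W k z * ((P.p k * P.m + k) / (2 * P.m) - z) = 0 := by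
  have hm := P.hm0
  have h1 := P.Psi_X z
  have h0 : P.poly z = 0 := hz.1.2
  have h2 := P.W_sum z
  have : ∑ k ∈ Finset.range (P.m+1), P.W k z * ((P.p k * P.m + k) / (2 * P.m) - z) =
    P.Psi (fun k => (k + P.m) / (2 * P.m)) (fun k => k / (2 * P.m)) z - (∑ k ∈ Finset.range (P.m + 1), P.W k z) * z := by
    rw [Psi, Finset.sum_mul, ← Finset.sum_sub_distrib]
    refine Finset.sum_congr rfl fun k hk => ?_
    field_simp; ring
  rw [this, h1, h2, h0]; ring

theorem ex_lo {z ε : ℝ} (hz : z ∈ P.Zp ∩ Set.Ioo (0 : ℝ) 1) (hε : 0 < ε)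
    (htouch : (∀ y ∈ Set.Ioo (z - ε) z ∪ Set.Ioo z (z + ε), 0 < P.poly y) ∨
              (∀ y ∈ Set.Ioo (z - ε) z ∪ Set.Ioo z (z + ε), P.poly y < 0)) :
    ∃ lo, P.Av lo ∧ (lo:ℝ) < 2 * P.m * z := by
  have hm := P.hm0
  by_contra hcon
  push Not at hcon
  have hnn : ∀ k ≤ P.m, 0 ≤ (P.p k * P.m + k) / (2 * P.m) - z := by
    intro k hk
    have hp := P.hp k hk
    rw [sub_nonneg, le_div_iff₀ (by positivity)]
    by_cases h1 : P.p k < 1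
    · have := hcon k ⟨k, hk, Or.inr ⟨h1, rfl⟩⟩
      nlinarith [mul_nonneg hp.1 hm.le]
    · have h1 : P.p k = 1 := le_antisymm hp.2 (not_lt.1 h1)
      have := hcon (k + P.m) ⟨k, hk, Or.inl ⟨by rw [h1]; norm_num, rfl⟩⟩
      push_cast at this
      rw [h1]; linarith
  have hs := P.sum_zero hz
  rw [Finset.sum_eq_zero_iff_of_nonneg (fun k hk => mul_nonneg (P.W_pos (by simp at hk; omega) hz.2).le (hnn k (by simp at hk; omega)))] at hs
  refine P.no_onesided hz hε htouch fun k hk => ?_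
  have := hs k (by simp; omega)
  exact (mul_eq_zero.1 this).resolve_left (P.W_pos hk hz.2).ne'

theorem ex_hi {z ε : ℝ} (hz : z ∈ P.Zp ∩ Set.Ioo (0 : ℝ) 1) (hε : 0 < ε)
    (htouch : (∀ y ∈ Set.Ioo (z - ε) z ∪ Set.Ioo z (z + ε), 0 < P.poly y) ∨
              (∀ y ∈ Set.Ioo (z - ε) z ∪ Set.Ioo z (z + ε), P.poly y < 0)) :
    ∃ hi, P.Av hi ∧ 2 * P.m * z < (hi:ℝ) := by
  have hm := P.hm0
  by_contra hcon
  push Not at hcon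
  have hnn : ∀ k ≤ P.m, (P.p k * P.m + k) / (2 * P.m) - z ≤ 0 := by
    intro k hk
    have hp := P.hp k hk
    rw [sub_nonpos, div_le_iff₀ (by positivity)]
    by_cases h1 : 0 < P.p k
    · have := hcon (k + P.m) ⟨k, hk, Or.inl ⟨h1, rfl⟩⟩
      push_cast at this
      nlinarith [mul_le_mul_of_nonneg_right hp.2 hm.le]
    · have h1 : P.p k = 0 := le_antisymm (not_lt.1 h1) hp.1
      have := hcon k ⟨k, hk, Or.inr ⟨by rw [h1]; norm_num, rfl⟩⟩
      rw [h1]; linarith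
  have hs := P.sum_zero hz
  rw [Finset.sum_eq_zero_iff_of_nonpos (fun k hk => mul_nonpos_of_nonneg_of_nonpos (P.W_pos (by simp at hk; omega) hz.2).le (hnn k (by simp at hk; omega)))] at hs
  refine P.no_onesided hz hε htouch fun k hk => ?_
  have := hs k (by simp; omega)
  exact (mul_eq_zero.1 this).resolve_left (P.W_pos hk hz.2).ne'

theorem poly_cont : Continuous P.poly := by unfold poly polyP; fun_prop

theorem poly_small {z ε : ℝ} (hz : z ∈ P.Zp ∩ Set.Ioo (0 : ℝ) 1) (hε : 0 < ε)
    (htouch : (∀ y ∈ Set.Ioo (z - ε) z ∪ Set.Ioo z (z + ε), 0 < P.poly y) ∨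
              (∀ y ∈ Set.Ioo (z - ε) z ∪ Set.Ioo z (z + ε), P.poly y < 0)) :
    ∃ r > 0, ∀ y, |y - z| < r → |P.poly y| ≤ |y - z| / 4 := by
  have h0 : P.poly z = 0 := hz.1.2
  have hd : Differentiable ℝ P.poly := by unfold poly polyP; fun_prop
  have hext : IsLocalExtr P.poly z := by
    have hn : Ioo (z - ε) (z + ε) ∈ nhds z := Ioo_mem_nhds (by linarith) (by linarith)
    rcases htouch with h | h
    · left
      filter_upwards [hn] with y hy
      rw [h0]
      rcases lt_trichotomy y z with h1 | h1 | h1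
      · exact (h y (Or.inl ⟨hy.1, h1⟩)).le
      · rw [h1, h0]
      · exact (h y (Or.inr ⟨h1, hy.2⟩)).le
    · right
      filter_upwards [hn] with y hy
      rw [h0]
      rcases lt_trichotomy y z with h1 | h1 | h1
      · exact (h y (Or.inl ⟨hy.1, h1⟩)).le
      · rw [h1, h0]
      · exact (h y (Or.inr ⟨h1, hy.2⟩)).le
  have hda := (hd z).hasDerivAt
  rw [hext.deriv_eq_zero, hasDerivAt_iff_isLittleO] at hda
  have := hda.def (show (0:ℝ) < 1/4 by norm_num)
  obtain ⟨r, hr, hr2⟩ := Metric.eventually_nhds_iff.1 this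
  refine ⟨r, hr, fun y hy => ?_⟩
  have := @hr2 y (by rwa [Real.dist_eq])
  simp [h0] at this
  linarith

theorem kron {b : ℕ → ℝ} {l : ℝ} (h : Tendsto (fun n => ∑ j ∈ Finset.range n, (1 / ((j:ℝ) + 1)) * b j) atTop (nhds l)) :
    Tendsto (fun n : ℕ => (n:ℝ)⁻¹ * ∑ j ∈ Finset.range n, b j) atTop (nhds 0) := by
  set M : ℕ → ℝ := fun n => ∑ j ∈ Finset.range n, (1 / ((j:ℝ) + 1)) * b j with hM
  have e : ∀ n : ℕ, ∑ j ∈ Finset.range n, b j = n * M n - ∑ j ∈ Finset.range n, M j := by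
    intro n
    induction n with
    | zero => simp
    | succ n ih =>
      rw [Finset.sum_range_succ, ih, Finset.sum_range_succ _ n]
      have : M (n+1) = M n + (1 / ((n:ℝ) + 1)) * b n := by simp only [hM]; rw [Finset.sum_range_succ]
      rw [this]; push_cast
      have : (n:ℝ) + 1 ≠ 0 := by positivity
      field_simp; ring
  have h2 := h.sub h.cesaro
  rw [sub_self] at h2
  refine h2.congr' ?_
  filter_upwards [eventually_gt_atTop 0] with n hn
  rw [e]
  have : (n:ℝ) ≠ 0 := by positivity
  field_simp

theorem a_conv {z : ℝ} (h0 : P.poly z = 0) :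
    ∀ᵐ ω ∂P.μ, Tendsto (fun n => P.x n ω) atTop (nhds z) → Tendsto (fun n => P.a n ω) atTop (nhds z) := by
  have := P.isProb
  obtain ⟨B, hB⟩ := P.xi_bdd (fun _ => 1) (fun _ => 0)
  have hsum : Summable (fun j : ℕ => (1 / ((j:ℝ) + 1))^2) := by
    have := (Real.summable_one_div_nat_add_rpow 1 2).2 (by norm_num)
    refine this.congr fun j => ?_
    rw [abs_of_pos (by positivity), div_pow, one_pow]; norm_cast
  have hw := (weighted (μ := P.μ) (N := 0) (H := Set.univ) (κ := ∑' j : ℕ, (1 / ((j:ℝ) + 1))^2) (cf := fun j => 1 / ((j:ℝ) + 1))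
    (P.xi_meas (fun _ => 1) (fun _ => 0)) hB (P.xi_cond _ _) MeasurableSet.univ (fun n => by
      simp only [Nat.zero_le, if_true]
      exact hsum.sum_le_tsum _ (fun _ _ => by positivity))).2
  filter_upwards [hw, ae_all_iff.2 P.A_rec] with ω ⟨l, hl⟩ hrec hx
  simp only [Nat.zero_le, if_true, Set.indicator_univ] at hl
  have k1 := kron hl
  have hq : Tendsto (fun n => P.x n ω + 2 * P.poly (P.x n ω)) atTop (nhds z) := by
    have := hx.add (((P.poly_cont.tendsto z).comp hx).const_mul 2)
    rw [h0] at this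
    simpa using this
  have k2 := hq.cesaro
  have hA : ∀ n, (P.A n ω : ℝ) = P.A0 + (∑ j ∈ Finset.range n, P.xi (fun _ => 1) (fun _ => 0) j ω +
      ∑ j ∈ Finset.range n, (P.x j ω + 2 * P.poly (P.x j ω))) := by
    intro n
    induction n with
    | zero => simp [P.hA0]
    | succ n ih => rw [hrec, ih, Finset.sum_range_succ, Finset.sum_range_succ]; ring
  have hinv : Tendsto (fun n : ℕ => ((n:ℝ))⁻¹) atTop (nhds 0) := tendsto_inv_atTop_nhds_zero_nat
  have k3 := ((hinv.const_mul (P.A0:ℝ)).add (k1.add k2)).div 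
    ((hinv.const_mul ((P.A0:ℝ) + P.B0)).add_const 1) (by simp)
  simp only [mul_zero, zero_add, div_one] at k3
  refine k3.congr' ?_
  filter_upwards [eventually_gt_atTop 0] with n hn
  have hn' : (0:ℝ) < n := by exact_mod_cast hn
  have hd : (0:ℝ) < (P.A0:ℝ) + P.B0 + n := by positivity
  rw [a, hA]
  simp only [Pi.div_apply]
  rw [div_eq_div_iff (by positivity) hd.ne']
  field_simp

end PA2
end PAProcess
/-- **Nonlinear models, touchpoints.** In a nonlinear model with `X_0, Y_0 > 0`, if
`z ∈ Z_P ∩ (0,1)` is a touchpoint, i.e. there is `ε > 0` such that `P` is either strictly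
positive or strictly negative on `(z−ε, z) ∪ (z, z+ε)`, then `a_n → z` with positive
probability. -/
theorem nonlinear_model_touchpoint
    {Ω : Type} [MeasurableSpace Ω] (P : PAProcess Ω)
    (hnonlin : ∃ k ≤ P.m, P.p k ≠ (k : ℝ) / P.m)
    (hX0 : 0 < P.X0) (hY0 : 0 < P.Y0)
    (z : ℝ) (hz : z ∈ P.Zp ∩ Set.Ioo (0 : ℝ) 1)
    (ε : ℝ) (hε : 0 < ε)
    (htouch : (∀ y ∈ Set.Ioo (z - ε) z ∪ Set.Ioo z (z + ε), 0 < P.poly y) ∨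
              (∀ y ∈ Set.Ioo (z - ε) z ∪ Set.Ioo z (z + ε), P.poly y < 0)) :
    0 < P.μ {ω | Tendsto (fun n => P.a n ω) atTop (nhds z)} := by
  have := P.isProb
  have h0 : P.poly z = 0 := hz.1.2
  obtain ⟨r, hr, hsmall⟩ := P.poly_small hz hε htouch
  obtain ⟨lo, hlo, hlo2⟩ := P.ex_lo hz hε htouch
  obtain ⟨hi, hhi, hhi2⟩ := P.ex_hi hz hε htouch
  obtain ⟨B, hB⟩ := P.xi_bdd (fun k => (k + P.m) / (2 * P.m)) (fun k => k / (2 * P.m))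
  have hm := P.hm0
  have hX0' : (0:ℝ) < P.X0 := by exact_mod_cast hX0
  have hc : 1 < (((P.X0 : ℝ) + P.Y0) / (2 * P.m) + 1) := by
    have : 0 < ((P.X0 : ℝ) + P.Y0) / (2 * P.m) := by positivity
    linarith
  suffices hx : 0 < P.μ {ω | Tendsto (fun n => P.x n ω) atTop (nhds z)} from
    hx.trans_le (measure_mono_ae (s := {ω | Tendsto (fun n => P.x n ω) atTop (nhds z)}) (P.a_conv h0))
  rcases htouch with ht | ht
  · set d := (2 * P.m * z - lo) / (2 * P.m) with hd
    have hdp : 0 < d := div_pos (by linarith) (by positivity)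
    have hde : 2 * P.m * d = 2 * P.m * z - lo := by rw [hd]; field_simp
    set η := min ε (min r d) with hη
    have e1 : η ≤ ε := min_le_left _ _
    have e2 : η ≤ r := (min_le_right _ _).trans (min_le_left _ _)
    have e3 : η ≤ d := (min_le_right _ _).trans (min_le_right _ _)
    have hηp : 0 < η := lt_min hε (lt_min hr hdp)
    refine abs_touch (F := P.F) (g := P.poly) (B := B) hc hηp P.x_meas (P.xi_meas _ _) hB (P.xi_cond _ _) (P.x_rec hX0)
      P.poly_cont (fun y hy => ht y (Or.inl ⟨by linarith [hy.1], hy.2⟩)) (fun y hy => ?_) (fun N0 t hta δ hδ => ?_)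
    · have h1 : |y - z| = z - y := by rw [abs_of_neg (by linarith [hy.2])]; ring
      have := hsmall y (by rw [h1]; linarith [hy.1])
      rw [h1] at this
      exact (le_abs_self _).trans this
    · refine P.reach hX0 hY0 hlo hhi ?_ ?_ N0 hδ
      · nlinarith [hta.1]
      · nlinarith [hta.2]
  · set d := (hi - 2 * P.m * z) / (2 * P.m) with hd
    have hdp : 0 < d := div_pos (by linarith) (by positivity)
    have hde : 2 * P.m * d = hi - 2 * P.m * z := by rw [hd]; field_simp
    set η := min ε (min r d) with hη
    have e1 : η ≤ ε := min_le_left _ _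
    have e2 : η ≤ r := (min_le_right _ _).trans (min_le_left _ _)
    have e3 : η ≤ d := (min_le_right _ _).trans (min_le_right _ _)
    have hηp : 0 < η := lt_min hε (lt_min hr hdp)
    have key := abs_touch (μ := P.μ) (F := P.F) (x := fun n ω => 1 - P.x n ω)
      (ξ := fun n ω => - P.xi (fun k => (k + P.m) / (2 * P.m)) (fun k => k / (2 * P.m)) n ω)
      (g := fun y => - P.poly (1 - y)) (z := 1 - z) (B := B) hc hηp
      (fun n => (P.x_meas n).const_sub 1) (fun n => (P.xi_meas _ _ n).neg) (fun n ω => by rw [abs_neg]; exact hB n ω)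
      (fun n => by
        filter_upwards [condExp_neg (μ := P.μ) (P.xi (fun k => (k + P.m) / (2 * P.m)) (fun k => k / (2 * P.m)) n) (P.F n),
          P.xi_cond (fun k => (k + P.m) / (2 * P.m)) (fun k => k / (2 * P.m)) n] with ω a b
        refine a.trans ?_
        rw [Pi.neg_apply, b]; simp)
      (fun n => by
        filter_upwards [P.x_rec hX0 n] with ω hω
        rw [hω, sub_sub_cancel]; ring)
      (P.poly_cont.comp (continuous_const.sub continuous_id)).neg
      (fun y hy => neg_pos.2 (ht (1 - y) (Or.inr ⟨by linarith [hy.2], by linarith [hy.1]⟩)))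
      (fun y hy => by
        have h1 : |1 - y - z| = 1 - z - y := by rw [abs_of_pos (by linarith [hy.2])]; ring
        have := hsmall (1 - y) (by rw [h1]; linarith [hy.1])
        rw [h1] at this
        exact (neg_le_abs _).trans this)
      (fun N0 t hta δ hδ => by
        obtain ⟨N, hN, hp⟩ := P.reach hX0 hY0 hlo hhi (t := 1 - t) (by nlinarith [hta.2]) (by nlinarith [hta.1]) N0 hδ
        refine ⟨N, hN, hp.trans_le (measure_mono fun ω hω => ?_)⟩
        have hω : |P.x N ω - (1 - t)| < δ := hω
        show |1 - P.x N ω - t| < δ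
        rw [abs_sub_comm] at hω
        rwa [show 1 - P.x N ω - t = 1 - t - P.x N ω by ring])
    refine key.trans_le (measure_mono fun ω hω => ?_)
    have hω : Tendsto (fun n => 1 - P.x n ω) atTop (nhds (1 - z)) := hω
    show Tendsto (fun n => P.x n ω) atTop (nhds z)
    have := hω.const_sub 1
    simpa using this
end
end
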